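/- Let X be the punctured Möbius band with boundary circles C₁ and C₂. Suppose f : X → X is a boundary-preserving map with f(∂X) ⊆ C₂ such that the restriction, viewed as a map f|C₁ : C₁ → C₂, is essential, while the restriction, viewed as a map f|C₂ : C₂ → C₂, is inessential. Then f is boundary-homotopic to a map g : X → X having at most two fixed points, exactly one of which lies in X ∖ ∂X. -/

import Mathlib

open Set

namespace PMB

/-- The square [0,1] × [−1,1] as a subspace of ℝ². -/
def Sq : Set (ℝ × ℝ) := Set.Icc 0 1 ×ˢ Set.Icc (-1) 1

/-- The identification (0,y) ∼ (1,−y) on the square. -/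
def rel (p q : Sq) : Prop :=
  (p : ℝ × ℝ) = (q : ℝ × ℝ) ∨
  ((p : ℝ × ℝ).1 = 0 ∧ (q : ℝ × ℝ).1 = 1 ∧ (p : ℝ × ℝ).2 = -(q : ℝ × ℝ).2) ∨
  ((p : ℝ × ℝ).1 = 1 ∧ (q : ℝ × ℝ).1 = 0 ∧ (q : ℝ × ℝ).2 = -(p : ℝ × ℝ).2)

/-- The Möbius band: the quotient of the square by the identification. -/
def M := Quot rel

instance : TopologicalSpace M := inferInstanceAs (TopologicalSpace (Quot rel))

/-- The quotient map. -/
def qm : Sq → M := Quot.mk rel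

/-- The open disc of radius 1/4 centred at (1/2, 0). -/
def Bdisc : Set (ℝ × ℝ) := Metric.ball (1/2, 0) (1/4)

/-- The circle of radius 1/4 centred at (1/2, 0). -/
def Scirc : Set (ℝ × ℝ) := Metric.sphere (1/2, 0) (1/4)

/-- The punctured Möbius band, as a subset of the Möbius band. -/
def Xset : Set M := {m | m ∉ qm '' {p : Sq | (p : ℝ × ℝ) ∈ Bdisc}}

/-- The punctured Möbius band as a topological space. -/
abbrev X : Type := ↥Xset

/-- The boundary circle of the Möbius band. -/
def C1 : Set X := {x | ∃ p : Sq, qm p = (x : M) ∧ ((p : ℝ × ℝ).2 = 1 ∨ (p : ℝ × ℝ).2 = -1)}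

/-- The boundary circle coming from the removed disc. -/
def C2 : Set X := {x | ∃ p : Sq, qm p = (x : M) ∧ (p : ℝ × ℝ) ∈ Scirc}

/-- The boundary of the punctured Möbius band. -/
def Bd : Set X := C1 ∪ C2

/-- A self-map of the punctured Möbius band is boundary-preserving if it sends ∂X into ∂X. -/
def BoundaryPreserving (f : C(X, X)) : Prop := MapsTo f Bd Bd

/-- Two self-maps are boundary-homotopic if there is a homotopy between them keeping
∂X inside ∂X at all times. -/
def BoundaryHomotopic (f g : C(X, X)) : Prop :=
  ∃ H : ContinuousMap.Homotopy f g, ∀ x : X, x ∈ Bd → ∀ t : unitInterval, H (t, x) ∈ Bd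

/-- A continuous map is inessential if it is homotopic to a constant map. -/
def Inessential {α β : Type*} [TopologicalSpace α] [TopologicalSpace β] (f : C(α, β)) : Prop :=
  ∃ b : β, ContinuousMap.Homotopic f (ContinuousMap.const α b)

/-- A continuous map is essential if it is not homotopic to a constant map. -/
def Essential {α β : Type*} [TopologicalSpace α] [TopologicalSpace β] (f : C(α, β)) : Prop :=
  ¬ Inessential f

/-- The restriction of a self-map of X to a subset `s` mapped into a subset `t`,
as a continuous map between the subspaces. -/
def restrictMap (f : C(X, X)) {s t : Set X} (h : MapsTo f s t) : C(s, t) :=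
  ⟨fun x => ⟨f x, h x.2⟩, Continuous.subtype_mk (f.continuous.comp continuous_subtype_val) _⟩

section

open Set

/-- Height profile of the arcs of the theta graph. -/
noncomputable def bet (x : ℝ) : ℝ := min 1 (2 - 2 * |x|)

lemma bet_cont : Continuous bet := by unfold bet; fun_prop

lemma bet_neg (x : ℝ) : bet (-x) = bet x := by simp [bet]

lemma bet_one : bet 1 = 0 := by norm_num [bet]

lemma bet_neg_one : bet (-1) = 0 := by norm_num [bet]

lemma bet_nonneg {x : ℝ} (hx : |x| ≤ 1) : 0 ≤ bet x := by
  unfold bet; apply le_min <;> linarith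

lemma bet_eq_zero {x : ℝ} (h : bet x = 0) : |x| = 1 := by
  unfold bet at h
  rcases min_choice (1:ℝ) (2 - 2 * |x|) with h' | h' <;> rw [h'] at h <;> linarith

/-- The theta graph. -/
def Theta : Set (ℝ × ℝ) := {p | |p.1| ≤ 1 ∧ (p.2 = 0 ∨ |p.2| = bet p.1)}

/-- The circle in the theta graph. -/
def Circ : Set (ℝ × ℝ) := {p | |p.1| ≤ 1 ∧ |p.2| = bet p.1}

lemma Circ_sub : Circ ⊆ Theta := fun _ hp => ⟨hp.1, Or.inr hp.2⟩

/-- The sign of each of the three edges. -/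
def cs : Fin 3 → ℝ := ![0, 1, -1]

/-- Bump functions of the three edges. -/
noncomputable def bump (s : Fin 3) (p : ℝ × ℝ) : ℝ :=
  (![bet p.1 - |p.2|, max p.2 0, max (-p.2) 0] : Fin 3 → ℝ) s

/-- auxiliary density -/
noncomputable def alp (x : ℝ) : ℝ := max (max ((1 - x) / 2) (1 / 4)) ((1 - x) / (4 * (1 + x)))

lemma bet_alp {x : ℝ} (h1 : -1 < x) (h2 : x ≤ 1) : bet x * alp x = (1 - x) / 2 := by
  unfold bet alp
  have hp : 0 < 4 * (1 + x) := by linarith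
  rcases le_total x (-1/2) with h | h
  · have e1 : |x| = -x := abs_of_nonpos (by linarith)
    rw [e1, min_eq_right (by linarith), max_eq_right]
    · have : (1 + x) ≠ 0 := by linarith
      field_simp; ring
    · apply max_le
      · rw [le_div_iff₀ hp]; nlinarith
      · rw [le_div_iff₀ hp]; nlinarith
  rcases le_total x (1/2) with h' | h'
  · rw [min_eq_left, max_eq_left, max_eq_left] <;> try linarith
    · rw [max_eq_left (by linarith), div_le_iff₀ hp]; nlinarith
    · rcases abs_cases x with ⟨e, _⟩ | ⟨e, _⟩ <;> rw [e] <;> linarith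
  · have e1 : |x| = x := abs_of_nonneg (by linarith)
    rw [e1, min_eq_right (by linarith), max_eq_left, max_eq_right] <;> try linarith
    · rw [max_eq_right (by linarith), div_le_iff₀ hp]; nlinarith

/-- Position on edge `s` measured from the vertex `v`. -/
noncomputable def apos (v : ℝ) (s : Fin 3) (p : ℝ × ℝ) : ℝ := bump s p * alp (v * p.1)

lemma bump_cont (s : Fin 3) : Continuous (bump s) := by
  have := bet_cont
  unfold bump
  fin_cases s <;> simp <;> fun_prop

lemma apos_cont (v : ℝ) (s : Fin 3) : ContinuousOn (apos v s) {p | 0 < 1 + v * p.1} := by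
  unfold apos alp
  have := bump_cont s
  refine this.continuousOn.mul ?_
  refine ContinuousOn.sup (by fun_prop) ?_
  refine ContinuousOn.div (by fun_prop) (by fun_prop) ?_
  intro p hp
  have : 0 < 1 + v * p.1 := hp
  linarith

lemma bump_self (s : Fin 3) {x : ℝ} (hx : |x| ≤ 1) : bump s (x, cs s * bet x) = bet x := by
  have := bet_nonneg hx
  fin_cases s <;> simp [bump, cs, this]

lemma bump_ne {s s' : Fin 3} (h : s' ≠ s) {x : ℝ} (hx : |x| ≤ 1) :
    bump s' (x, cs s * bet x) = 0 := by
  have := bet_nonneg hx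
  fin_cases s <;> fin_cases s' <;> simp [bump, cs, this, abs_of_nonneg] at h ⊢

lemma sq_one {v : ℝ} (hv : |v| = 1) : v * v = 1 := by
  have := abs_mul_abs_self v; rw [hv] at this; linarith

lemma bet_mul {v : ℝ} (hv : |v| = 1) (x : ℝ) : bet (v * x) = bet x := by
  simp [bet, abs_mul, hv]

lemma apos_self {v : ℝ} (hv : |v| = 1) (s : Fin 3) {t : ℝ} (h0 : 0 ≤ t) (h1 : t < 1) :
    apos v s (v * (1 - 2 * t), cs s * bet (1 - 2 * t)) = t := by
  have hx : |1 - 2 * t| ≤ 1 := by rw [abs_le]; constructor <;> linarith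
  have hx' : |v * (1 - 2 * t)| ≤ 1 := by rw [abs_mul, hv, one_mul]; exact hx
  have := bump_self s hx'
  rw [bet_mul hv] at this
  unfold apos
  rw [this]
  simp only
  rw [← mul_assoc, sq_one hv, one_mul, bet_alp (by linarith) (by linarith)]
  ring

lemma apos_ne {v : ℝ} (hv : |v| = 1) {s s' : Fin 3} (h : s' ≠ s) {t : ℝ} (h0 : 0 ≤ t)
    (h1 : t ≤ 1) : apos v s' (v * (1 - 2 * t), cs s * bet (1 - 2 * t)) = 0 := by
  have hx : |1 - 2 * t| ≤ 1 := by rw [abs_le]; constructor <;> linarith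
  have hx' : |v * (1 - 2 * t)| ≤ 1 := by rw [abs_mul, hv, one_mul]; exact hx
  have := bump_ne h hx'
  rw [bet_mul hv] at this
  unfold apos
  rw [this, zero_mul]

lemma Theta_edge {v : ℝ} (hv : |v| = 1) {p : ℝ × ℝ} (hp : p ∈ Theta) (hne : 0 < 1 + v * p.1) :
    ∃ s t, 0 ≤ t ∧ t < 1 ∧ p = (v * (1 - 2 * t), cs s * bet (1 - 2 * t)) := by
  obtain ⟨x, y⟩ := p
  obtain ⟨h1, h2⟩ := hp
  simp only at h1 h2 hne
  have hvx : |v * x| ≤ 1 := by rw [abs_mul, hv, one_mul]; exact h1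
  have hx : v * (1 - 2 * ((1 - v * x) / 2)) = x := by
    have := sq_one hv
    calc v * (1 - 2 * ((1 - v * x) / 2)) = (v * v) * x := by ring
      _ = x := by rw [this, one_mul]
  have hb : bet (1 - 2 * ((1 - v * x) / 2)) = bet x := by
    rw [← bet_mul hv, hx]
  have key : ∃ s, y = cs s * bet x := by
    rcases h2 with h2 | h2
    · exact ⟨0, by simp [cs, h2]⟩
    · rcases abs_cases y with ⟨e, _⟩ | ⟨e, _⟩
      · exact ⟨1, by simp [cs]; linarith⟩
      · exact ⟨2, by simp [cs]; linarith⟩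
  obtain ⟨s, hs⟩ := key
  refine ⟨s, (1 - v * x) / 2, ?_, ?_, ?_⟩
  · have := (abs_le.1 hvx).2; linarith
  · linarith
  · rw [hx, hb, hs]


/-- Letter of a word. -/
def lt : List Bool → Fin 3
  | [] => 0
  | true :: w => lt w + 1
  | false :: w => lt w + 2

lemma lt_cons_ne (b : Bool) (w : List Bool) : lt (b :: w) ≠ lt w := by
  cases b <;> simp only [lt] <;> generalize lt w = s <;> revert s <;> decide

lemma lt_cases (w : List Bool) (s : Fin 3) : s = lt w ∨ ∃ b, s = lt (b :: w) := by
  have : s = lt w ∨ s = lt (true :: w) ∨ s = lt (false :: w) := by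
    simp only [lt]; generalize lt w = s' ; revert s s'; decide
  rcases this with h | h | h
  · exact Or.inl h
  · exact Or.inr ⟨_, h⟩
  · exact Or.inr ⟨_, h⟩

lemma lt_cons_inj {b b' : Bool} (w : List Bool) (h : lt (b :: w) = lt (b' :: w)) : b = b' := by
  cases b <;> cases b' <;> simp only [lt] at h ⊢ <;> exfalso <;> revert h <;>
    generalize lt w = s <;> revert s <;> decide

/-- The point at position `t` on the edge ending at `w`. -/
noncomputable def chain (w : List Bool) (t : ℝ) (u : List Bool) : ℝ :=
  if u = w then t else if u <:+ w then 1 else 0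

lemma chain_self (w : List Bool) (t : ℝ) : chain w t w = t := by simp [chain]

lemma chain_suffix {w u : List Bool} (t : ℝ) (h : u <:+ w) (h' : u ≠ w) : chain w t u = 1 := by
  simp [chain, h, h']

lemma chain_not {w u : List Bool} (t : ℝ) (h : ¬ u <:+ w) : chain w t u = 0 := by
  have : u ≠ w := by rintro rfl; exact h (List.suffix_refl _)
  simp [chain, h, this]

lemma chain_nil_zero : chain [] 0 = 0 := by
  funext u
  by_cases h : u = []
  · subst h; simp [chain]
  · simp [chain, h]

lemma not_cons_suffix (b : Bool) (w : List Bool) : ¬ (b :: w) <:+ w := by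
  intro h; have := h.length_le; simp at this

lemma chain_cons_zero (b : Bool) (w : List Bool) : chain (b :: w) 0 = chain w 1 := by
  funext u
  by_cases h : u = b :: w
  · subst h; rw [chain_self, chain_not _ (not_cons_suffix b w)]
  by_cases h' : u <:+ w
  · rw [chain_suffix _ (h'.trans (List.suffix_cons b w)) h]
    by_cases h2 : u = w
    · subst h2; rw [chain_self]
    · rw [chain_suffix _ h' h2]
  · rw [chain_not _ h', chain_not]
    rw [List.suffix_cons_iff]; tauto

lemma chain_pos {w u : List Bool} {t : ℝ} (ht : 0 < t) : 0 < chain w t u ↔ u <:+ w := by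
  by_cases h : u <:+ w
  · by_cases h' : u = w
    · subst h'; simp [chain_self, ht]
    · simp [chain_suffix t h h', h]
  · simp [chain_not t h, h]

lemma chain_inj {w w' : List Bool} {t t' : ℝ} (ht : 0 < t) (ht' : 0 < t')
    (h : chain w t = chain w' t') : w = w' ∧ t = t' := by
  have h1 : w <:+ w' := by
    rw [← chain_pos ht', ← h, chain_self]; exact ht
  have h2 : w' <:+ w := by
    rw [← chain_pos ht, h, chain_self]; exact ht'
  have : w = w' := h1.eq_of_length_le h2.length_le
  subst this
  refine ⟨rfl, ?_⟩
  have := congrFun h w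
  rwa [chain_self, chain_self] at this

lemma chain_ne_zero {w : List Bool} {t : ℝ} (ht : 0 < t) : chain w t ≠ 0 := by
  intro h
  have := congrFun h w
  rw [chain_self] at this
  simp at this; linarith

/-- A point of the tree is zero or a chain with positive end. -/
lemma chain_normal (w : List Bool) {t : ℝ} (h0 : 0 ≤ t) (h1 : t ≤ 1) :
    chain w t = 0 ∨ ∃ w' t', 0 < t' ∧ t' ≤ 1 ∧ chain w t = chain w' t' := by
  rcases h0.lt_or_eq with h | h
  · exact Or.inr ⟨w, t, h, h1, rfl⟩
  · subst h
    cases w with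
    | nil => exact Or.inl chain_nil_zero
    | cons b w => exact Or.inr ⟨w, 1, one_pos, le_rfl, chain_cons_zero b w⟩

/-- Parity sign. -/
def sg (w : List Bool) : ℝ := (-1) ^ w.length

lemma sg_nil : sg [] = 1 := by simp [sg]

lemma sg_cons (b : Bool) (w : List Bool) : sg (b :: w) = - sg w := by
  simp [sg, pow_succ]

lemma sg_abs (w : List Bool) : |sg w| = 1 := by simp [sg, abs_pow]

lemma sg_sq (w : List Bool) : sg w * sg w = 1 := sq_one (sg_abs w)

/-- Parametrisation of the edges in the theta graph. -/
noncomputable def edge (z : ℝ) (w : List Bool) (t : ℝ) : ℝ × ℝ :=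
  (z * sg w * (1 - 2 * t), cs (lt w) * bet (1 - 2 * t))

lemma edge_mem {z : ℝ} (hz : |z| = 1) (w : List Bool) {t : ℝ} (h0 : 0 ≤ t) (h1 : t ≤ 1) :
    edge z w t ∈ Theta := by
  have hx : |1 - 2 * t| ≤ 1 := by rw [abs_le]; constructor <;> linarith
  refine ⟨?_, ?_⟩
  · simp [edge, abs_mul, hz, sg_abs, hx]
  · have e : bet (z * sg w * (1 - 2 * t)) = bet (1 - 2 * t) := by
      apply bet_mul; rw [abs_mul, hz, sg_abs, one_mul]
    simp only [edge, e]
    have hb := bet_nonneg hx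
    generalize lt w = s
    fin_cases s <;> simp [cs, abs_of_nonneg hb]

end

section

open Set

/-- The covering space of the theta graph, as a set. -/
def Eset : Set ((ℝ × ℝ) × (List Bool → ℝ)) :=
  {q | (q.1 ∈ Circ ∧ q.2 = 0) ∨
    ∃ w t, 0 ≤ t ∧ t ≤ 1 ∧ |q.1.1| = 1 ∧ q.1.2 = 0 ∧ q.2 = chain w t}

lemma vert_mem {p : ℝ × ℝ} (h1 : |p.1| = 1) (h2 : p.2 = 0) : p ∈ Circ := by
  refine ⟨h1.le, ?_⟩
  have : bet p.1 = 0 := by simp [bet, h1]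
  rw [this, h2, abs_zero]

lemma Eset_normal {q : (ℝ × ℝ) × (List Bool → ℝ)} (hq : q ∈ Eset) :
    (q.1 ∈ Circ ∧ q.2 = 0) ∨
    ∃ w t, 0 < t ∧ t ≤ 1 ∧ |q.1.1| = 1 ∧ q.1.2 = 0 ∧ q.2 = chain w t := by
  rcases hq with h | ⟨w, t, h0, h1, h2, h3, h4⟩
  · exact Or.inl h
  · rcases chain_normal w h0 h1 with h | ⟨w', t', h5, h6, h7⟩
    · exact Or.inl ⟨vert_mem h2 h3, h4.trans h⟩
    · exact Or.inr ⟨w', t', h5, h6, h2, h3, h4.trans h7⟩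

/-- The covering space of the theta graph. -/
abbrev Ehat : Type := ↥Eset

lemma prj_exists (q : Ehat) : ∃ θ : Theta, (q.1.2 = 0 ∧ θ.1 = q.1.1) ∨
    ∃ w t, 0 < t ∧ t ≤ 1 ∧ q.1.2 = chain w t ∧ θ.1 = edge q.1.1.1 w t := by
  rcases Eset_normal q.2 with h | ⟨w, t, h0, h1, h2, h3, h4⟩
  · exact ⟨⟨q.1.1, Circ_sub h.1⟩, Or.inl ⟨h.2, rfl⟩⟩
  · exact ⟨⟨_, edge_mem h2 w h0.le h1⟩, Or.inr ⟨w, t, h0, h1, h4, rfl⟩⟩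

/-- The covering projection. -/
noncomputable def prj (q : Ehat) : Theta := (prj_exists q).choose

lemma prj_root (q : Ehat) (h : q.1.2 = 0) : (prj q).1 = q.1.1 := by
  rcases (prj_exists q).choose_spec with h' | ⟨w, t, h0, h1, h2, h3⟩
  · exact h'.2
  · exact absurd (h2.symm.trans h) (chain_ne_zero h0)

lemma prj_chain_pos (q : Ehat) {w : List Bool} {t : ℝ} (h0 : 0 < t)
    (h : q.1.2 = chain w t) : (prj q).1 = edge q.1.1.1 w t := by
  rcases (prj_exists q).choose_spec with h' | ⟨w', t', h0', h1, h2, h3⟩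
  · exact absurd (h.symm.trans h'.1) (chain_ne_zero h0)
  · obtain ⟨rfl, rfl⟩ := chain_inj h0 h0' (h.symm.trans h2)
    exact h3

lemma prj_chain (q : Ehat) {w : List Bool} {t : ℝ} (h0 : 0 ≤ t)
    (hp : q.1.1.2 = 0) (h : q.1.2 = chain w t) : (prj q).1 = edge q.1.1.1 w t := by
  rcases h0.lt_or_eq with h0 | h0
  · exact prj_chain_pos q h0 h
  · subst h0
    cases w with
    | nil =>
      rw [prj_root q (h.trans chain_nil_zero)]
      ext <;> simp [edge, sg_nil, hp, bet_one]
    | cons b w =>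
      rw [prj_chain_pos q one_pos (h.trans (chain_cons_zero b w))]
      have e : (1:ℝ) - 2 * 1 = -1 := by norm_num
      ext
      · simp only [edge, sg_cons]; ring
      · simp only [edge, e, bet_neg_one]; norm_num [bet_one]

/-- The open stars of the vertices over `v`. -/
def star (v : ℝ) : Option (List Bool) → Set Ehat
  | none => {q | q.1.2 [] < 1 ∧ 0 < 1 + v * q.1.1.1}
  | some w => {q | 0 < q.1.2 w ∧ q.1.2 (true :: w) < 1 ∧ q.1.2 (false :: w) < 1 ∧
      v * sg w * q.1.1.1 < 0}

lemma star_open (v : ℝ) (i : Option (List Bool)) : IsOpen (star v i) := by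
  have hc : ∀ u : List Bool, Continuous (fun q : Ehat => q.1.2 u) := fun u =>
    (continuous_apply u).comp (continuous_snd.comp continuous_subtype_val)
  have hx : Continuous (fun q : Ehat => q.1.1.1) := by fun_prop
  cases i with
  | none =>
    exact (isOpen_lt (hc _) continuous_const).inter (isOpen_lt continuous_const
      (continuous_const.add (continuous_const.mul hx)))
  | some w =>
    exact (isOpen_lt continuous_const (hc _)).inter <|
      (isOpen_lt (hc _) continuous_const).inter <|
      (isOpen_lt (hc _) continuous_const).inter (isOpen_lt (continuous_const.mul hx) continuous_const)

lemma sign_cases {v : ℝ} (hv : |v| = 1) : v = 1 ∨ v = -1 := by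
  rcases abs_cases v with ⟨e, _⟩ | ⟨e, _⟩
  · left; linarith
  · right; linarith

lemma star_none_cases {v : ℝ} (hv : |v| = 1) {q : Ehat} (hq : q ∈ star v none) :
    (q.1.2 = 0 ∧ q.1.1 ∈ Circ ∧ 0 < 1 + v * q.1.1.1) ∨
    ∃ t, 0 < t ∧ t < 1 ∧ q.1.1 = (v, 0) ∧ q.1.2 = chain [] t := by
  obtain ⟨h1, h2⟩ := hq
  rcases Eset_normal q.2 with h | ⟨w, t, h3, h4, h5, h6, h7⟩
  · exact Or.inl ⟨h.2, h.1, h2⟩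
  · right
    rw [h7] at h1
    have hw : w = [] := by
      by_contra hne
      rw [chain_suffix t List.nil_suffix (Ne.symm hne)] at h1
      exact lt_irrefl _ h1
    subst hw
    rw [chain_self] at h1
    refine ⟨t, h3, h1, ?_, h7⟩
    ext
    · rcases sign_cases hv with rfl | rfl <;> rcases sign_cases h5 with e | e <;> rw [e] at h2 ⊢ <;>
        norm_num at h2
    · exact h6

lemma star_some_cases {v : ℝ} (hv : |v| = 1) {w : List Bool} {q : Ehat}
    (hq : q ∈ star v (some w)) :
    q.1.1 = (-v * sg w, 0) ∧ ((∃ t, 0 < t ∧ t ≤ 1 ∧ q.1.2 = chain w t) ∨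
    ∃ b t, 0 < t ∧ t < 1 ∧ q.1.2 = chain (b :: w) t) := by
  obtain ⟨h1, h2, h2', h3⟩ := hq
  rcases Eset_normal q.2 with h | ⟨w', t, h4, h5, h6, h7, h8⟩
  · rw [h.2] at h1; simp at h1
  constructor
  · ext
    · rcases sign_cases hv with rfl | rfl <;> rcases sign_cases h6 with e | e <;>
        rcases sign_cases (sg_abs w) with e' | e' <;> rw [e, e'] at h3 <;> rw [e, e'] <;>
        first | (exfalso; norm_num at h3; done) | norm_num
    · exact h7
  · have hb : ∀ b, q.1.2 (b :: w) < 1 := by intro b; cases b <;> assumption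
    rw [h8] at h1 hb
    rw [chain_pos h4] at h1
    obtain ⟨l, hl⟩ := h1
    rcases List.eq_nil_or_concat l with rfl | ⟨l', b, rfl⟩
    · left; simp at hl; subst hl; exact ⟨t, h4, h5, h8⟩
    · right
      have hs : (b :: w) <:+ w' := ⟨l', by rw [← hl]; simp⟩
      have hbb := hb b
      by_cases he : b :: w = w'
      · subst he
        rw [chain_self] at hbb
        exact ⟨b, t, h4, hbb, h8⟩
      · rw [chain_suffix t hs he] at hbb
        exact absurd hbb (lt_irrefl _)

lemma star_disj {v : ℝ} (hv : |v| = 1) {i j : Option (List Bool)} {q : Ehat}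
    (hi : q ∈ star v i) (hj : q ∈ star v j) : i = j := by
  have hn : ∀ w, q ∈ star v none → q ∈ star v (some w) → False := by
    intro w h1 h2
    obtain ⟨hp, h2⟩ := star_some_cases hv h2
    rcases star_none_cases hv h1 with ⟨h, _, _⟩ | ⟨t, h3, h4, h5, h6⟩
    · rcases h2 with ⟨t, h3, _, h4⟩ | ⟨b, t, h3, _, h4⟩ <;>
        exact chain_ne_zero h3 (h4.symm.trans h)
    · rcases h2 with ⟨t', h3', _, h4'⟩ | ⟨b, t', h3', _, h4'⟩
      · obtain ⟨e, _⟩ := chain_inj h3 h3' (h6.symm.trans h4')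
        subst e
        have := hp.symm.trans h5
        rw [Prod.mk.injEq, sg_nil] at this
        rcases sign_cases hv with rfl | rfl <;> norm_num at this
      · obtain ⟨e, _⟩ := chain_inj h3 h3' (h6.symm.trans h4')
        simp at e
  have hsg : ∀ w w' : List Bool, ((-v * sg w, (0:ℝ)) : ℝ × ℝ) = (-v * sg w', 0) → ∀ b, w ≠ b :: w' := by
    rintro w w' h b rfl
    rw [Prod.mk.injEq, sg_cons] at h
    rcases sign_cases hv with rfl | rfl <;> rcases sign_cases (sg_abs w') with e' | e' <;>
      rw [e'] at h <;> norm_num at h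
  cases i with
  | none =>
    cases j with
    | none => rfl
    | some w => exact (hn w hi hj).elim
  | some w =>
    cases j with
    | none => exact (hn w hj hi).elim
    | some w' =>
      obtain ⟨hp, h2⟩ := star_some_cases hv hi
      obtain ⟨hp', h2'⟩ := star_some_cases hv hj
      have hs := hsg w w' (hp.symm.trans hp')
      have hs' := hsg w' w (hp'.symm.trans hp)
      rcases h2 with ⟨t, h3, _, h4⟩ | ⟨b, t, h3, _, h4⟩ <;>
      rcases h2' with ⟨t', h3', _, h4'⟩ | ⟨b', t', h3', _, h4'⟩ <;>
      obtain ⟨e, _⟩ := chain_inj h3 h3' (h4.symm.trans h4')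
      · rw [e]
      · exact absurd e (hs b')
      · exact absurd e.symm (hs' b)
      · simp at e; rw [e.2]

lemma star_cover {v : ℝ} (hv : |v| = 1) (q : Ehat) (hq : 0 < 1 + v * (prj q).1.1) :
    ∃ i, q ∈ star v i := by
  rcases Eset_normal q.2 with h | ⟨w, t, h4, h5, h6, h7, h8⟩
  · refine ⟨none, ?_, ?_⟩
    · rw [h.2]; simp
    · rwa [prj_root q h.2] at hq
  · rw [prj_chain_pos q h4 h8] at hq
    simp only [edge] at hq
    have hcases : q.1.1.1 * sg w = v ∨ q.1.1.1 * sg w = -v := by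
      rcases sign_cases hv with rfl | rfl <;> rcases sign_cases h6 with e | e <;>
        rcases sign_cases (sg_abs w) with e' | e' <;> rw [e, e'] <;> norm_num
    have hvv := sq_one hv
    rcases hcases with hc | hc
    · rw [hc, ← mul_assoc, hvv] at hq
      have ht : t < 1 := by linarith
      cases w with
      | nil =>
        refine ⟨none, ?_, ?_⟩
        · rw [h8, chain_self]; exact ht
        · rw [sg_nil, mul_one] at hc; rw [hc, hvv]; norm_num
      | cons b w =>
        refine ⟨some w, ?_, ?_, ?_, ?_⟩
        · rw [h8, chain_pos h4]; exact List.suffix_cons b w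
        · rw [h8]
          by_cases hb : true = b
          · subst hb; rw [chain_self]; exact ht
          · rw [chain_not]; exact one_pos
            intro hs; have := hs.eq_of_length (by simp); simp at this; exact hb this.symm
        · rw [h8]
          by_cases hb : false = b
          · subst hb; rw [chain_self]; exact ht
          · rw [chain_not]; exact one_pos
            intro hs; have := hs.eq_of_length (by simp); simp at this; exact hb this.symm
        · rw [sg_cons] at hc
          have : v * sg w * q.1.1.1 = -(v * v) := by
            calc v * sg w * q.1.1.1 = -(v * (q.1.1.1 * -sg w)) := by ring
              _ = _ := by rw [hc]
          rw [this, hvv]; norm_num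
    · refine ⟨some w, ?_, ?_, ?_, ?_⟩
      · rw [h8, chain_self]; exact h4
      · rw [h8, chain_not _ (not_cons_suffix _ _)]; exact one_pos
      · rw [h8, chain_not _ (not_cons_suffix _ _)]; exact one_pos
      · have : v * sg w * q.1.1.1 = -(v * v) := by
          calc v * sg w * q.1.1.1 = v * (q.1.1.1 * sg w) := by ring
            _ = _ := by rw [hc]; ring
        rw [this, hvv]; norm_num

end

section

open Set

lemma evenly {E B ι : Type*} [TopologicalSpace E] [TopologicalSpace B] [TopologicalSpace ι]
    [DiscreteTopology ι] {f : E → B} (hf : Continuous f) {U : Set B} (hU : IsOpen U)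
    (O : ι → Set E) (hO : ∀ i, IsOpen (O i)) (hd : ∀ i j e, e ∈ O i → e ∈ O j → i = j)
    (hc : ∀ e, f e ∈ U → ∃ i, e ∈ O i) (s : ι → U → E) (hs : ∀ i, Continuous (s i))
    (hfs : ∀ i u, f (s i u) = u.1) (hsO : ∀ i u, s i u ∈ O i)
    (hsf : ∀ i e (h : f e ∈ U), e ∈ O i → s i ⟨f e, h⟩ = e) {x : B} (hx : x ∈ U) :
    IsEvenlyCovered f x ι := by
  classical
  choose c hcm using hc
  refine ⟨inferInstance, U, hx, hU, hU.preimage hf, ?_⟩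
  refine ⟨{ toFun := fun e => (⟨f e.1, e.2⟩, c e.1 e.2)
            invFun := fun p => ⟨s p.2 p.1, by rw [mem_preimage, hfs]; exact p.1.2⟩
            left_inv := ?_
            right_inv := ?_
            continuous_toFun := ?_
            continuous_invFun := ?_ }, ?_⟩
  · intro e
    apply Subtype.ext
    exact hsf _ _ e.2 (hcm _ _)
  · rintro ⟨u, i⟩
    refine Prod.ext ?_ ?_
    · apply Subtype.ext; exact hfs i u
    · exact hd _ _ _ (hcm _ _) (hsO i u)
  · refine Continuous.prodMk (Continuous.subtype_mk (hf.comp continuous_subtype_val) _) ?_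
    refine continuous_discrete_rng.2 fun i => ?_
    have : (fun e : f ⁻¹' U => c e.1 e.2) ⁻¹' {i} = Subtype.val ⁻¹' (O i) := by
      ext e
      simp only [mem_preimage, mem_singleton_iff]
      constructor
      · rintro rfl; exact hcm _ _
      · intro h; exact hd _ _ _ (hcm _ _) h
    rw [this]
    exact (hO i).preimage continuous_subtype_val
  · refine Continuous.subtype_mk ?_ _
    exact continuous_prod_of_discrete_right.2 fun i => hs i
  · intro e; rfl

/-- Neighbourhood of the vertex `v`. -/
def Uv (v : ℝ) : Set Theta := {θ | 0 < 1 + v * θ.1.1}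

lemma Uv_open (v : ℝ) : IsOpen (Uv v) :=
  isOpen_lt continuous_const (by fun_prop)

lemma Uv_cover (θ : Theta) : θ ∈ Uv 1 ∨ θ ∈ Uv (-1) := by
  change 0 < 1 + 1 * θ.1.1 ∨ 0 < 1 + (-1) * θ.1.1
  by_contra h
  push Not at h
  linarith

/-- local formula for the projection -/
noncomputable def prjF (v : ℝ) : Option (List Bool) → ((ℝ × ℝ) × (List Bool → ℝ)) → ℝ × ℝ
  | none, q => (q.1.1 - 2 * v * q.2 [], q.1.2)
  | some w, q => (v * (2 * q.2 w - 1 - 2 * q.2 (true :: w) - 2 * q.2 (false :: w)),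
      cs (lt w) * bet (1 - 2 * q.2 w) + cs (lt (true :: w)) * bet (1 - 2 * q.2 (true :: w))
      + cs (lt (false :: w)) * bet (1 - 2 * q.2 (false :: w)))

lemma prjF_cont (v : ℝ) (i : Option (List Bool)) : Continuous (prjF v i) := by
  have := bet_cont
  cases i with
  | none =>
    change Continuous (fun q : (ℝ × ℝ) × (List Bool → ℝ) => (q.1.1 - 2 * v * q.2 [], q.1.2))
    fun_prop
  | some w =>
    change Continuous (fun q : (ℝ × ℝ) × (List Bool → ℝ) =>
      (v * (2 * q.2 w - 1 - 2 * q.2 (true :: w) - 2 * q.2 (false :: w)),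
      cs (lt w) * bet (1 - 2 * q.2 w) + cs (lt (true :: w)) * bet (1 - 2 * q.2 (true :: w))
      + cs (lt (false :: w)) * bet (1 - 2 * q.2 (false :: w))))
    fun_prop

lemma chain_other {b b' : Bool} (h : b' ≠ b) (w : List Bool) (t : ℝ) :
    chain (b :: w) t (b' :: w) = 0 := by
  apply chain_not
  intro hs; have := hs.eq_of_length (by simp); simp at this; exact h this

lemma chain_tail (b : Bool) (w : List Bool) (t : ℝ) : chain (b :: w) t w = 1 :=
  chain_suffix _ (List.suffix_cons b w) (by simp)

lemma prj_eq_F {v : ℝ} (hv : |v| = 1) {i : Option (List Bool)} {q : Ehat} (hq : q ∈ star v i) :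
    (prj q).1 = prjF v i q.1 := by
  cases i with
  | none =>
    rcases star_none_cases hv hq with ⟨h, _, _⟩ | ⟨t, h3, h4, h5, h6⟩
    · rw [prj_root q h]; simp [prjF, h]
    · rw [prj_chain_pos q h3 h6]; simp [prjF, h5, h6, edge, sg_nil, lt, cs, chain_self]; ring
  | some w =>
    obtain ⟨hp, h⟩ := star_some_cases hv hq
    have hs := sg_sq w
    have h1 : bet (1 - 2) = 0 := by rw [← bet_neg_one]; norm_num
    rcases h with ⟨t, h3, h4, h5⟩ | ⟨b, t, h3, h4, h5⟩
    · rw [prj_chain_pos q h3 h5]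
      simp only [prjF, h5, edge, chain_self, chain_not _ (not_cons_suffix _ _), hp]
      simp only [mul_zero, sub_zero, bet_one, add_zero, Prod.mk.injEq, and_true]
      linear_combination v * (2 * t - 1) * hs
    · rw [prj_chain_pos q h3 h5]
      simp only [prjF, h5, edge, chain_tail, hp, sg_cons]
      cases b
      · rw [chain_self, chain_other (by simp)]
        simp only [mul_zero, sub_zero, bet_one, mul_one, h1, zero_add, Prod.mk.injEq, and_true]
        linear_combination v * (1 - 2 * t) * hs
      · rw [chain_self, chain_other (by simp)]
        simp only [mul_zero, sub_zero, bet_one, mul_one, h1, zero_add, add_zero, Prod.mk.injEq,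
          and_true]
        linear_combination v * (1 - 2 * t) * hs

lemma prj_cont : Continuous prj := by
  rw [continuous_iff_continuousAt]
  intro q
  have : ∃ v : ℝ, |v| = 1 ∧ prj q ∈ Uv v := by
    rcases Uv_cover (prj q) with h | h
    · exact ⟨1, by simp, h⟩
    · exact ⟨-1, by simp, h⟩
  obtain ⟨v, hv, hq⟩ := this
  obtain ⟨i, hi⟩ := star_cover hv q hq
  have hc : ContinuousOn (fun q : Ehat => (prj q).1) (star v i) := by
    refine ContinuousOn.congr (f := fun q : Ehat => prjF v i q.1) ?_ ?_
    · exact ((prjF_cont v i).comp continuous_subtype_val).continuousOn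
    · intro q hq; exact prj_eq_F hv hq
  have := hc.continuousAt ((star_open v i).mem_nhds hi)
  exact Topology.IsInducing.subtypeVal.continuousAt_iff.2 this

/-- local sections, in coordinates -/
noncomputable def secF (v : ℝ) : Option (List Bool) → (ℝ × ℝ) → ((ℝ × ℝ) × (List Bool → ℝ))
  | none, θ => (if bet θ.1 ≤ 2 * |θ.2| then θ else (v, 0), chain [] (apos v 0 θ))
  | some w, θ => ((-v * sg w, 0), fun u => if u = w then 1 - apos v (lt w) θ else
      if u ≠ [] ∧ u.tail = w then apos v (lt u) θ else chain w 1 u)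

lemma bet_pos {t : ℝ} (h0 : 0 < t) (h1 : t < 1) : 0 < bet (1 - 2 * t) := by
  have hx : |1 - 2 * t| < 1 := by rw [abs_lt]; constructor <;> linarith
  refine lt_min one_pos (by linarith)

lemma secF_a {v : ℝ} (hv : |v| = 1) {t : ℝ} (h0 : 0 ≤ t) (h1 : t < 1) :
    secF v none (v * (1 - 2 * t), cs 0 * bet (1 - 2 * t)) = ((v, 0), chain [] t) := by
  simp only [secF, apos_self hv 0 h0 h1]
  congr 1
  simp only [bet_mul hv, cs]
  rcases h0.lt_or_eq with h | h
  · have := bet_pos h h1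
    rw [if_neg]; simp; exact this
  · subst h; simp

lemma secF_b {v : ℝ} (hv : |v| = 1) {s : Fin 3} (hs : s ≠ 0) {t : ℝ} (h0 : 0 ≤ t) (h1 : t < 1) :
    secF v none (v * (1 - 2 * t), cs s * bet (1 - 2 * t)) =
      ((v * (1 - 2 * t), cs s * bet (1 - 2 * t)), 0) := by
  simp only [secF, apos_ne hv hs.symm h0 h1.le, chain_nil_zero]
  congr 1
  have hx : |1 - 2 * t| ≤ 1 := by rw [abs_le]; constructor <;> linarith
  have := bet_nonneg hx
  rw [if_pos]
  simp only [bet_mul hv]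
  have hc : |cs s| = 1 := by fin_cases s <;> simp [cs] at hs ⊢
  rw [abs_mul, hc, abs_of_nonneg this]; linarith

lemma secF_c {v : ℝ} (hv : |v| = 1) (w : List Bool) {t : ℝ} (h0 : 0 ≤ t) (h1 : t < 1) :
    secF v (some w) (v * (1 - 2 * t), cs (lt w) * bet (1 - 2 * t)) =
      ((-v * sg w, 0), chain w (1 - t)) := by
  simp only [secF, apos_self hv _ h0 h1]
  congr 1
  funext u
  by_cases hu : u = w
  · simp [hu, chain_self]
  rw [if_neg hu]
  by_cases hu' : u ≠ [] ∧ u.tail = w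
  · rw [if_pos hu']
    cases u with
    | nil => simp at hu'
    | cons b u =>
      simp at hu'
      subst hu'
      rw [apos_ne hv (lt_cons_ne b u) h0 h1.le, chain_not _ (not_cons_suffix _ _)]
  · rw [if_neg hu']; simp [chain, hu]

lemma secF_d {v : ℝ} (hv : |v| = 1) (b : Bool) (w : List Bool) {t : ℝ} (h0 : 0 ≤ t) (h1 : t < 1) :
    secF v (some w) (v * (1 - 2 * t), cs (lt (b :: w)) * bet (1 - 2 * t)) =
      ((-v * sg w, 0), chain (b :: w) t) := by
  simp only [secF, apos_ne hv (lt_cons_ne b w).symm h0 h1.le]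
  congr 1
  funext u
  by_cases hu : u = w
  · simp [hu, chain_tail]
  rw [if_neg hu]
  by_cases hu' : u ≠ [] ∧ u.tail = w
  · rw [if_pos hu']
    cases u with
    | nil => simp at hu'
    | cons b' u =>
      simp at hu'
      subst hu'
      by_cases hb : b' = b
      · subst hb; rw [apos_self hv _ h0 h1, chain_self]
      · rw [apos_ne hv _ h0 h1.le, chain_other hb]
        intro h; exact hb (lt_cons_inj _ h)
  · rw [if_neg hu', ← chain_cons_zero b]
    have : u ≠ b :: w := by rintro rfl; simp at hu'
    simp [chain, this]

lemma secF_cont {v : ℝ} (hv : |v| = 1) (i : Option (List Bool)) :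
    Continuous (fun u : Uv v => secF v i u.1.1) := by
  have ha : ∀ s, Continuous (fun u : Uv v => apos v s u.1.1) := by
    intro s
    refine (apos_cont v s).comp_continuous (by fun_prop) ?_
    intro u; exact u.2
  have hb := bet_cont
  cases i with
  | none =>
    simp only [secF]
    refine Continuous.prodMk ?_ ?_
    · refine continuous_if_le (by fun_prop) (by fun_prop) (by fun_prop) (by fun_prop) ?_
      rintro ⟨⟨⟨x, y⟩, h1, h2⟩, h3⟩ h
      have h3x : 0 < 1 + v * x := h3
      simp only at h h1 h2
      have hy : y = 0 := by
        rcases h2 with h2 | h2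
        · exact h2
        · rw [← h2] at h; have : |y| = 0 := by linarith
          exact abs_eq_zero.1 this
      subst hy
      simp only [abs_zero, mul_zero] at h
      have := bet_eq_zero h
      simp only [Prod.mk.injEq, and_true]
      rcases sign_cases hv with rfl | rfl <;> rcases sign_cases this with rfl | rfl <;> first | (exfalso; norm_num at h3x; done) | rfl
    · refine continuous_pi fun u => ?_
      by_cases hu : u = []
      · subst hu; simpa only [chain_self] using ha 0
      · simp only [chain, hu, if_false]; exact continuous_const
  | some w =>
    simp only [secF]
    refine Continuous.prodMk continuous_const (continuous_pi fun u => ?_)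
    split_ifs
    · exact continuous_const.sub (ha _)
    · exact ha _
    · exact continuous_const

lemma secF_spec {v : ℝ} (hv : |v| = 1) (i : Option (List Bool)) (u : Uv v) :
    ∃ h : secF v i u.1.1 ∈ Eset, prj ⟨_, h⟩ = u.1 ∧ (⟨_, h⟩ : Ehat) ∈ star v i := by
  obtain ⟨⟨p, hp⟩, hu⟩ := u
  obtain ⟨s, t, h0, h1, hpe⟩ := Theta_edge hv hp hu
  have hvs : ∀ w, |-v * sg w| = 1 := by intro w; simp [abs_mul, hv, sg_abs]
  have hvv := sq_one hv
  cases i with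
  | none =>
    by_cases hs : s = 0
    · subst hs
      have e := secF_a hv h0 h1
      rw [← hpe] at e
      have hm : secF v none p ∈ Eset := by
        rw [e]; exact Or.inr ⟨[], t, h0, h1.le, hv, rfl, rfl⟩
      refine ⟨hm, ?_, ?_, ?_⟩
      · apply Subtype.ext
        rw [prj_chain (w := []) (t := t) _ h0 (by simp only [e]) (by simp only [e])]
        simp only [edge, e, sg_nil, lt, mul_one]; exact hpe.symm
      · simp only [e, chain_self]; exact h1
      · simp only [e, hvv]; norm_num
    · have e := secF_b hv hs h0 h1
      rw [← hpe] at e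
      have hm : secF v none p ∈ Eset := by
        rw [e]; refine Or.inl ⟨⟨hp.1, ?_⟩, rfl⟩
        simp only [hpe, bet_mul hv]
        have hc : |cs s| = 1 := by fin_cases s <;> simp [cs] at hs ⊢
        have hx : |1 - 2 * t| ≤ 1 := by rw [abs_le]; constructor <;> linarith
        rw [abs_mul, hc, abs_of_nonneg (bet_nonneg hx), one_mul]
      refine ⟨hm, ?_, ?_, ?_⟩
      · apply Subtype.ext
        rw [prj_root _ (by simp only [e])]
        simp only [e]
      · simp only [e]; simp
      · simp only [e]; exact hu
  | some w =>
    have hs := sg_sq w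
    rcases lt_cases w s with rfl | ⟨b, rfl⟩
    · have e := secF_c hv w h0 h1
      rw [← hpe] at e
      have hm : secF v (some w) p ∈ Eset := by
        rw [e]; exact Or.inr ⟨w, 1 - t, by linarith, by linarith, hvs w, rfl, rfl⟩
      refine ⟨hm, ?_, ?_, ?_, ?_, ?_⟩
      · apply Subtype.ext
        rw [prj_chain (w := w) (t := 1 - t) _ (by linarith) (by simp only [e]) (by simp only [e])]
        simp only [edge, e]; rw [hpe]
        ext
        · simp only; linear_combination v * (1 - 2 * t) * hs
        · simp only; rw [← bet_neg]; congr 2; ring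
      · simp only [e, chain_self]; linarith
      · simp only [e, chain_not _ (not_cons_suffix _ _)]; norm_num
      · simp only [e, chain_not _ (not_cons_suffix _ _)]; norm_num
      · simp only [e]
        have : v * sg w * (-v * sg w) = -1 := by linear_combination -sg w * sg w * hvv - hs
        rw [this]; norm_num
    · have e := secF_d hv b w h0 h1
      rw [← hpe] at e
      have hm : secF v (some w) p ∈ Eset := by
        rw [e]; exact Or.inr ⟨b :: w, t, h0, h1.le, hvs w, rfl, rfl⟩
      refine ⟨hm, ?_, ?_, ?_, ?_, ?_⟩
      · apply Subtype.ext
        rw [prj_chain (w := b :: w) (t := t) _ h0 (by simp only [e]) (by simp only [e])]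
        simp only [edge, e, sg_cons]; rw [hpe]
        ext
        · simp only; linear_combination v * (1 - 2 * t) * hs
        · rfl
      · simp only [e, chain_tail]; norm_num
      · simp only [e]
        by_cases hb : true = b
        · subst hb; rw [chain_self]; exact h1
        · rw [chain_other hb]; exact one_pos
      · simp only [e]
        by_cases hb : false = b
        · subst hb; rw [chain_self]; exact h1
        · rw [chain_other hb]; exact one_pos
      · simp only [e]
        have : v * sg w * (-v * sg w) = -1 := by linear_combination -sg w * sg w * hvv - hs
        rw [this]; norm_num

lemma secF_left {v : ℝ} (hv : |v| = 1) (i : Option (List Bool)) (q : Ehat) (hq : q ∈ star v i) :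
    secF v i (prj q).1 = q.1 := by
  have hvv := sq_one hv
  cases i with
  | none =>
    rcases star_none_cases hv hq with ⟨h, h1, h2⟩ | ⟨t, h3, h4, h5, h6⟩
    · rw [prj_root q h]
      obtain ⟨s, t, h3, h4, h5⟩ := Theta_edge hv (Circ_sub h1) h2
      by_cases hs : s = 0
      · subst hs
        have hy : q.1.1.2 = 0 := by rw [h5]; simp [cs]
        have hb : bet (1 - 2 * t) = 0 := by
          have := h1.2
          rw [hy, abs_zero, h5, bet_mul hv] at this
          exact this.symm
        have ht : t = 0 := by
          rcases h3.lt_or_eq with h | h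
          · have := bet_pos h h4; linarith
          · exact h.symm
        subst ht
        rw [h5, secF_a hv le_rfl one_pos]
        refine Prod.ext ?_ ?_
        · rw [h5]; simp [cs]
        · rw [h, chain_nil_zero]
      · rw [h5, secF_b hv hs h3 h4]
        refine Prod.ext ?_ ?_
        · rw [h5]
        · rw [h]
    · rw [prj_chain_pos q h3 h6]
      have e : edge q.1.1.1 [] t = (v * (1 - 2 * t), cs 0 * bet (1 - 2 * t)) := by
        simp [edge, h5, sg_nil, lt]
      rw [e, secF_a hv h3.le h4, ← h5, ← h6]
  | some w =>
    obtain ⟨hp, h⟩ := star_some_cases hv hq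
    have hs := sg_sq w
    rcases h with ⟨t, h3, h4, h5⟩ | ⟨b, t, h3, h4, h5⟩
    · rw [prj_chain_pos q h3 h5]
      have e : edge q.1.1.1 w t = (v * (1 - 2 * (1 - t)), cs (lt w) * bet (1 - 2 * (1 - t))) := by
        simp only [edge, hp]
        ext
        · simp only; linear_combination v * (2 * t - 1) * hs
        · simp only; rw [← bet_neg]; congr 2; ring
      rw [e, secF_c hv w (by linarith) (by linarith), ← hp, sub_sub_cancel, ← h5]
    · rw [prj_chain_pos q h3 h5]
      have e : edge q.1.1.1 (b :: w) t =
          (v * (1 - 2 * t), cs (lt (b :: w)) * bet (1 - 2 * t)) := by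
        simp only [edge, hp, sg_cons]
        ext
        · simp only; linear_combination v * (1 - 2 * t) * hs
        · rfl
      rw [e, secF_d hv b w h3.le h4, ← hp, ← h5]

lemma prj_covering : IsCoveringMap prj := by
  intro θ
  have : ∃ v : ℝ, |v| = 1 ∧ θ ∈ Uv v := by
    rcases Uv_cover θ with h | h
    · exact ⟨1, by simp, h⟩
    · exact ⟨-1, by simp, h⟩
  obtain ⟨v, hv, hθ⟩ := this
  let _ : TopologicalSpace (Option (List Bool)) := ⊥
  have : DiscreteTopology (Option (List Bool)) := ⟨rfl⟩
  refine IsEvenlyCovered.to_isEvenlyCovered_preimage (I := Option (List Bool)) ?_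
  refine evenly prj_cont (Uv_open v) (star v) (star_open v) (fun i j e => star_disj hv)
    (fun e he => star_cover hv e he) (fun i u => ⟨_, (secF_spec hv i u).1⟩)
    (fun i => Continuous.subtype_mk (secF_cont hv i) _)
    (fun i u => (secF_spec hv i u).2.1) (fun i u => (secF_spec hv i u).2.2)
    (fun i e h he => Subtype.ext (secF_left hv i e he)) hθ

end

section

open Set

/-- cut-off heights -/
noncomputable def capN (s : ℝ) (w : List Bool) : ℝ :=
  ((w.length : ℝ) + 2) * (1 - s * ((w.length : ℝ) + 1))

/-- truncation of tree coordinates -/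
noncomputable def cap (s : ℝ) (h : List Bool → ℝ) (w : List Bool) : ℝ :=
  max 0 (min (h w) (capN s w))

lemma capN_ge {s : ℝ} {u w : List Bool} (hl : u.length < w.length) (hN : 0 < capN s w) :
    1 ≤ capN s u := by
  have h1 : s * ((w.length : ℝ) + 1) < 1 := by
    by_contra h
    push Not at h
    unfold capN at hN
    have : (0:ℝ) ≤ w.length := Nat.cast_nonneg _
    nlinarith
  have h2 : (u.length : ℝ) + 1 ≤ w.length := by exact_mod_cast hl
  have h3 : (0:ℝ) ≤ u.length := Nat.cast_nonneg _
  unfold capN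
  generalize (u.length : ℝ) = a at *
  generalize (w.length : ℝ) = L at *
  have hL : 0 < L + 1 := by linarith
  have key : (L + 1) * 1 ≤ (L + 1) * ((a + 2) * (1 - s * (a + 1))) := by
    have : s * (L + 1) * (a + 1) ≤ (a + 1) := by nlinarith
    have e : (L + 1) * ((a + 2) * (1 - s * (a + 1))) =
        (a + 2) * ((L + 1) - s * (L + 1) * (a + 1)) := by ring
    rw [e]
    nlinarith
  exact le_of_mul_le_mul_left key hL

lemma cap_chain (s : ℝ) (w : List Bool) : ∀ t : ℝ, 0 ≤ t → t ≤ 1 →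
    ∃ w' t', 0 ≤ t' ∧ t' ≤ 1 ∧ cap s (chain w t) = chain w' t' := by
  induction w with
  | nil =>
    intro t h0 h1
    refine ⟨[], max 0 (min t (capN s [])), le_max_left _ _, ?_, ?_⟩
    · exact max_le zero_le_one ((min_le_left _ _).trans h1)
    · funext u
      by_cases hu : u = []
      · subst hu; simp [cap, chain_self]
      · simp [cap, chain, hu]
  | cons b w ih =>
    intro t h0 h1
    rcases lt_or_ge 0 (capN s (b :: w)) with h | h
    · refine ⟨b :: w, max 0 (min t (capN s (b :: w))), le_max_left _ _, ?_, ?_⟩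
      · exact max_le zero_le_one ((min_le_left _ _).trans h1)
      · funext u
        by_cases hu : u = b :: w
        · subst hu; simp [cap, chain_self]
        · by_cases hs : u <:+ (b :: w)
          · rw [chain_suffix _ hs hu, cap, chain_suffix _ hs hu]
            have hl : u.length < (b :: w).length :=
              lt_of_le_of_ne hs.length_le fun e => hu (hs.eq_of_length e)
            rw [min_eq_left (capN_ge hl h)]; simp
          · rw [chain_not _ hs, cap, chain_not _ hs]; simp
    · obtain ⟨w', t', a1, a2, a3⟩ := ih 1 zero_le_one le_rfl
      refine ⟨w', t', a1, a2, ?_⟩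
      rw [← a3, ← chain_cons_zero b]
      funext u
      by_cases hu : u = b :: w
      · subst hu
        simp only [cap, chain_self]
        rw [max_eq_left (min_le_of_right_le h), max_eq_left (min_le_of_right_le h)]
      · simp [cap, chain, hu]

lemma cap_zero_fun (s : ℝ) : cap s 0 = 0 := by
  funext u; simp [cap]

lemma cap_mem (s : ℝ) (q : Ehat) : (q.1.1, cap s q.1.2) ∈ Eset := by
  rcases q.2 with h | ⟨w, t, h0, h1, h2, h3, h4⟩
  · left; refine ⟨h.1, ?_⟩
    simp only [h.2, cap_zero_fun]
  · right
    obtain ⟨w', t', a1, a2, a3⟩ := cap_chain s w t h0 h1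
    exact ⟨w', t', a1, a2, h2, h3, by simp only [h4, a3]⟩

/-- the deformation of the covering space onto its circle -/
noncomputable def rhoD (p : ℝ × Ehat) : Ehat := ⟨_, cap_mem p.1 p.2⟩

lemma rhoD_cont : Continuous rhoD := by
  refine Continuous.subtype_mk (Continuous.prodMk (by fun_prop) (continuous_pi fun w => ?_)) _
  have hc : Continuous (fun p : ℝ × Ehat => p.2.1.2 w) :=
    (continuous_apply w).comp (continuous_snd.comp (continuous_subtype_val.comp continuous_snd))
  simp only [cap, capN]
  exact continuous_const.max (hc.min (by fun_prop))

lemma E_range (q : Ehat) (u : List Bool) : 0 ≤ q.1.2 u ∧ q.1.2 u ≤ 1 := by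
  rcases q.2 with h | ⟨w, t, h0, h1, h2, h3, h4⟩
  · rw [h.2]; simp
  · rw [h4, chain]; split_ifs
    · exact ⟨h0, h1⟩
    · norm_num
    · norm_num

lemma rhoD_zero (q : Ehat) : rhoD (0, q) = q := by
  apply Subtype.ext
  refine Prod.ext rfl ?_
  funext u
  have := E_range q u
  have hl : (0:ℝ) ≤ u.length := Nat.cast_nonneg _
  simp only [rhoD, cap, capN]
  rw [min_eq_left (by linarith), max_eq_right this.1]

lemma rhoD_one (q : Ehat) : (rhoD (1, q)).1.2 = 0 := by
  funext u
  have hl : (0:ℝ) ≤ u.length := Nat.cast_nonneg _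
  simp only [rhoD, cap, capN]
  exact max_eq_left (min_le_of_right_le (by nlinarith))

lemma rhoD_root {q : Ehat} (h : q.1.2 = 0) (s : ℝ) : rhoD (s, q) = q := by
  apply Subtype.ext
  refine Prod.ext rfl ?_
  simp only [rhoD, h, cap_zero_fun]

lemma rhoD_fst (s : ℝ) (q : Ehat) : (rhoD (s, q)).1.1 = q.1.1 := rfl

lemma E_root_mem {q : Ehat} (h : q.1.2 = 0) : q.1.1 ∈ Circ := by
  rcases q.2 with h' | ⟨w, t, h0, h1, h2, h3, h4⟩
  · exact h'.1
  · exact vert_mem h2 h3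

lemma prj_root_mem {q : Ehat} (h : q.1.2 = 0) : (prj q).1 ∈ Circ := by
  rw [prj_root q h]; exact E_root_mem h

lemma E_nonroot {q : Ehat} (h : q.1.2 ≠ 0) : |q.1.1.1| = 1 ∧ q.1.1.2 = 0 := by
  rcases q.2 with h' | ⟨w, t, h0, h1, h2, h3, h4⟩
  · exact absurd h'.2 h
  · exact ⟨h2, h3⟩

/-- retraction of the theta graph onto its circle -/
noncomputable def rTh (θ : ℝ × ℝ) : ℝ × ℝ := (θ.1, θ.2 + (bet θ.1 - |θ.2|))

lemma rTh_cont : Continuous rTh := by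
  have := bet_cont
  unfold rTh; fun_prop

lemma rTh_mem {θ : ℝ × ℝ} (h : θ ∈ Theta) : rTh θ ∈ Circ := by
  obtain ⟨h1, h2⟩ := h
  refine ⟨h1, ?_⟩
  have := bet_nonneg h1
  rcases h2 with h2 | h2
  · simp [rTh, h2, abs_of_nonneg this]
  · simp [rTh, h2]

lemma rTh_self {θ : ℝ × ℝ} (h : θ ∈ Circ) : rTh θ = θ := by
  ext <;> simp [rTh, h.2]

end

section

open Set Topology

/-- sup-norm distance to the centre of the hole -/
noncomputable def rhoP (p : ℝ × ℝ) : ℝ := max |p.1 - 1/2| |p.2|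

lemma rhoP_cont : Continuous rhoP := by unfold rhoP; fun_prop

/-- embedding of the Möbius band, in coordinates -/
noncomputable def mP (p : ℝ × ℝ) : ℂ × ℂ :=
  (Complex.exp (2 * Real.pi * Complex.I * p.1), p.2 * Complex.exp (Real.pi * Complex.I * p.1))

lemma mP_cont : Continuous mP := by unfold mP; fun_prop

lemma mP_T (x y : ℝ) : mP (x + 1, -y) = mP (x, y) := by
  unfold mP
  ext1
  · simp only
    rw [Complex.exp_eq_exp_iff_exists_int]
    exact ⟨1, by push_cast; ring⟩
  · simp only
    have : Complex.exp (Real.pi * Complex.I * ((x + 1 : ℝ) : ℂ)) =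
        - Complex.exp (Real.pi * Complex.I * x) := by
      rw [← mul_neg_one, ← Complex.exp_pi_mul_I, ← Complex.exp_add]
      congr 1; push_cast; ring
    rw [this]; push_cast; ring

lemma rel_mP {p q : Sq} (h : rel p q) : mP p = mP q := by
  rcases p with ⟨⟨x, y⟩, hp⟩
  rcases q with ⟨⟨x', y'⟩, hq⟩
  rcases h with h | ⟨h1, h2, h3⟩ | ⟨h1, h2, h3⟩
  · exact congrArg mP h
  · simp only at h1 h2 h3; subst h1 h2 h3
    have := mP_T 0 (-y'); simpa using this.symm
  · simp only at h1 h2 h3; subst h1 h2 h3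
    have := mP_T 0 (-y); simpa using this

lemma mP_rel {p q : Sq} (h : mP p = mP q) : rel p q := by
  rcases p with ⟨⟨x, y⟩, hp⟩
  rcases q with ⟨⟨x', y'⟩, hq⟩
  simp only [Sq, mem_prod, mem_Icc] at hp hq
  simp only [mP, Prod.mk.injEq] at h
  obtain ⟨h1, h2⟩ := h
  rw [Complex.exp_eq_exp_iff_exists_int] at h1
  obtain ⟨n, hn⟩ := h1
  have hx : x = x' + n := by
    have hpi : (2 * Real.pi * Complex.I : ℂ) ≠ 0 := Complex.two_pi_I_ne_zero
    have : (2 * Real.pi * Complex.I : ℂ) * x = (2 * Real.pi * Complex.I : ℂ) * (x' + n) := by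
      rw [hn]; ring
    have := mul_left_cancel₀ hpi this
    exact_mod_cast this
  have hn1 : n ≤ 1 := by
    have : (n:ℝ) ≤ 1 := by linarith
    exact_mod_cast this
  have hn2 : -1 ≤ n := by
    have : (-1:ℝ) ≤ n := by linarith
    exact_mod_cast this
  have hy : ∀ z : ℂ, ((y : ℂ) * Complex.exp z = y' * Complex.exp z) → y = y' := by
    intro z hz
    exact_mod_cast mul_right_cancel₀ (Complex.exp_ne_zero z) hz
  interval_cases n
  · right; left
    have e1 : x = 0 := by push_cast at hx; linarith
    have e2 : x' = 1 := by push_cast at hx; linarith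
    subst e1 e2
    refine ⟨rfl, rfl, ?_⟩
    simp [Complex.exp_pi_mul_I] at h2
    exact_mod_cast h2
  · left
    simp at hx
    subst hx
    simp [hy _ h2]
  · right; right
    have e1 : x = 1 := by push_cast at hx; linarith
    have e2 : x' = 0 := by push_cast at hx; linarith
    subst e1 e2
    refine ⟨rfl, rfl, ?_⟩
    simp [Complex.exp_pi_mul_I] at h2
    have : -y = y' := by exact_mod_cast h2
    exact this.symm

/-- the embedding of the Möbius band -/
noncomputable def mE : M → ℂ × ℂ := Quot.lift (fun p : Sq => mP p) fun _ _ h => rel_mP h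

lemma mE_qm (p : Sq) : mE (qm p) = mP p := rfl

lemma qm_cont : Continuous qm := continuous_quot_mk

lemma qm_surj (m : M) : ∃ p, qm p = m := Quot.exists_rep m

lemma mE_cont : Continuous mE :=
  continuous_quot_lift _ (mP_cont.comp continuous_subtype_val)

lemma mE_inj : Function.Injective mE := by
  intro a b h
  obtain ⟨p, rfl⟩ := qm_surj a
  obtain ⟨q, rfl⟩ := qm_surj b
  exact Quot.sound (mP_rel h)

lemma qm_eq {p q : Sq} : qm p = qm q ↔ rel p q :=
  ⟨fun h => mP_rel (congrArg mE h), fun h => Quot.sound h⟩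

instance : CompactSpace Sq :=
  isCompact_iff_compactSpace.1 (isCompact_Icc.prod isCompact_Icc)

instance : CompactSpace M := by
  refine ⟨?_⟩
  have : (univ : Set M) = range qm := by
    ext m; simp only [mem_univ, mem_range, true_iff]; exact qm_surj m
  rw [this]; exact isCompact_range qm_cont

instance : T2Space M := T2Space.of_injective_continuous mE_inj mE_cont

lemma mE_emb : IsEmbedding mE := (mE_cont.isClosedEmbedding mE_inj).isEmbedding

/-- clamp to [-1,1] -/
noncomputable def cl (y : ℝ) : ℝ := max (-1) (min y 1)

lemma cl_cont : Continuous cl := by unfold cl; fun_prop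

lemma cl_mem (y : ℝ) : cl y ∈ Icc (-1:ℝ) 1 :=
  ⟨le_max_left _ _, max_le (by norm_num) (min_le_right _ _)⟩

lemma cl_self {y : ℝ} (h : |y| ≤ 1) : cl y = y := by
  rw [abs_le] at h
  rw [cl, min_eq_left h.2, max_eq_right h.1]

lemma cl_neg (y : ℝ) : cl (-y) = - cl y := by
  simp only [cl, max_def, min_def]; split_ifs <;> linarith

lemma mE_exists (x : ℝ) {y : ℝ} (hy : |y| ≤ 1) : ∃ m, mE m = mP (x, y) := by
  have key : ∀ (n : ℤ) (x y : ℝ), x ∈ Icc (0:ℝ) 1 → |y| ≤ 1 → ∃ m, mE m = mP (x + n, y) := by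
    intro n
    induction n using Int.induction_on with
    | zero =>
      intro x y hx hy
      exact ⟨qm ⟨(x, y), hx, abs_le.1 hy⟩, by simp [mE_qm]⟩
    | succ n ih =>
      intro x y hx hy
      obtain ⟨m, hm⟩ := ih x (-y) hx (by rwa [abs_neg])
      refine ⟨m, ?_⟩
      rw [hm, ← mP_T]; push_cast; rw [neg_neg, add_assoc]
    | pred n ih =>
      intro x y hx hy
      obtain ⟨m, hm⟩ := ih x (-y) hx (by rwa [abs_neg])
      refine ⟨m, ?_⟩
      rw [hm, ← mP_T _ y]; push_cast; congr 2; ring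
  obtain ⟨m, hm⟩ := key ⌊x⌋ (Int.fract x) y ⟨Int.fract_nonneg x, (Int.fract_lt_one x).le⟩ hy
  exact ⟨m, by rw [hm, Int.fract_add_floor]⟩

/-- the universal covering of the Möbius band (clamped in the second coordinate) -/
noncomputable def sig (p : ℝ × ℝ) : M := (mE_exists p.1 (abs_le.2 (cl_mem p.2))).choose

lemma mE_sig (p : ℝ × ℝ) : mE (sig p) = mP (p.1, cl p.2) :=
  (mE_exists p.1 (abs_le.2 (cl_mem p.2))).choose_spec

lemma sig_cont : Continuous sig := by
  rw [mE_emb.continuous_iff]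
  have : mE ∘ sig = fun p => mP (p.1, cl p.2) := by funext p; exact mE_sig p
  rw [this]
  exact mP_cont.comp (continuous_fst.prodMk (cl_cont.comp continuous_snd))

lemma sig_T (x y : ℝ) : sig (x + 1, -y) = sig (x, y) := by
  apply mE_inj
  rw [mE_sig, mE_sig]
  simp only [cl_neg, mP_T]

lemma sig_qm (p : Sq) : sig p = qm p := by
  apply mE_inj
  rw [mE_sig, mE_qm, cl_self (abs_le.2 p.2.2)]

lemma sig_surj (m : M) : ∃ p ∈ Sq, sig p = m := by
  obtain ⟨p, rfl⟩ := qm_surj m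
  exact ⟨p, p.2, sig_qm p⟩

lemma sig_eq {p q : ℝ × ℝ} (hp : p ∈ Sq) (hq : q ∈ Sq) (h : sig p = sig q) :
    p = q ∨ (p.1 = 0 ∧ q.1 = 1 ∧ p.2 = - q.2) ∨ (p.1 = 1 ∧ q.1 = 0 ∧ q.2 = - p.2) := by
  have h' : qm ⟨p, hp⟩ = qm ⟨q, hq⟩ := by rw [← sig_qm, ← sig_qm]; exact h
  exact qm_eq.1 h'

/-- a representative in the square -/
noncomputable def rep (m : M) : ℝ × ℝ := (sig_surj m).choose

lemma rep_mem (m : M) : rep m ∈ Sq := (sig_surj m).choose_spec.1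

lemma sig_rep (m : M) : sig (rep m) = m := (sig_surj m).choose_spec.2

lemma quot_M {K Y : Type*} [TopologicalSpace K] [TopologicalSpace Y] (A : Set M)
    (hA : IsClosed A) (Φ : K × A → Y)
    (φ : K × (ℝ × ℝ) → Y) (hφ : ContinuousOn φ {z | z.2 ∈ Sq ∧ sig z.2 ∈ A})
    (h : ∀ k (x : A) p, p ∈ Sq → sig p = x.1 → Φ (k, x) = φ (k, p)) : Continuous Φ := by
  let D : Set (ℝ × ℝ) := Sq ∩ sig ⁻¹' A
  have hD : IsCompact D :=
    (isCompact_Icc.prod isCompact_Icc).inter_right (hA.preimage sig_cont)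
  have : CompactSpace D := isCompact_iff_compactSpace.1 hD
  let π : D → A := fun p => ⟨sig p, p.2.2⟩
  have hπ : Continuous π := (sig_cont.comp continuous_subtype_val).subtype_mk _
  have hP : IsProperMap (Prod.map (id : K → K) π) := isProperMap_id.prodMap hπ.isProperMap
  have hs : Function.Surjective (Prod.map (id : K → K) π) := by
    rintro ⟨k, x⟩
    obtain ⟨p, hp, hpx⟩ := sig_surj x.1
    exact ⟨(k, ⟨p, hp, by rw [mem_preimage, hpx]; exact x.2⟩), Prod.ext rfl (Subtype.ext hpx)⟩
  have hq := hP.isClosedMap.isQuotientMap hP.continuous hs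
  rw [hq.continuous_iff]
  have e : Φ ∘ Prod.map (id : K → K) π = fun z : K × D => φ (z.1, z.2.1) := by
    funext z
    exact h z.1 _ z.2.1 z.2.2.1 rfl
  rw [e]
  refine hφ.comp_continuous (f := fun z : K × D => (z.1, z.2.1)) (by fun_prop) ?_
  intro z
  exact z.2.2

/-- height function -/
noncomputable def rho (m : M) : ℝ := rhoP (rep m)

lemma rho_sig {p : ℝ × ℝ} (hp : p ∈ Sq) : rho (sig p) = rhoP p := by
  unfold rho
  rcases sig_eq (rep_mem _) hp (sig_rep (sig p)) with h | ⟨h1, h2, h3⟩ | ⟨h1, h2, h3⟩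
  · rw [h]
  · simp only [rhoP, h1, h2, h3, abs_neg]; norm_num
  · simp only [rhoP, h1, h2, h3, abs_neg]; norm_num

lemma rho_cont : Continuous rho := by
  have h := quot_M (K := Unit) (A := univ) isClosed_univ (fun z => rho z.2.1) (fun z => rhoP z.2)
    (rhoP_cont.comp continuous_snd).continuousOn ?_
  · exact h.comp (f := fun m : M => ((), (⟨m, mem_univ m⟩ : (univ : Set M)))) (by fun_prop)
  · intro k x p hp h
    rw [← h]
    exact rho_sig hp

lemma dist_rhoP (p : ℝ × ℝ) : dist p (1/2, 0) = rhoP p := by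
  rw [Prod.dist_eq, Real.dist_eq, Real.dist_eq, rhoP, sub_zero]

lemma mem_X (m : M) : m ∈ Xset ↔ 1/4 ≤ rho m := by
  constructor
  · intro h
    by_contra hc
    push Not at hc
    refine h ⟨⟨rep m, rep_mem m⟩, ?_, ?_⟩
    · change rep m ∈ Metric.ball _ _
      rw [Metric.mem_ball, dist_rhoP]; exact hc
    · rw [← sig_qm]; exact sig_rep m
  · rintro h ⟨p, hp, rfl⟩
    rw [← sig_qm, rho_sig p.2, ← dist_rhoP] at h
    have : dist p.1 (1/2, 0) < 1/4 := hp
    linarith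

lemma mem_C2 (x : X) : x ∈ C2 ↔ rho x.1 = 1/4 := by
  constructor
  · rintro ⟨p, hp, h⟩
    rw [← hp, ← sig_qm, rho_sig p.2, ← dist_rhoP]; exact h
  · intro h
    refine ⟨⟨rep x.1, rep_mem _⟩, ?_, ?_⟩
    · rw [← sig_qm]; exact sig_rep _
    · change dist _ _ = _
      rw [dist_rhoP]; exact h

lemma rhoP_eq_one {p : ℝ × ℝ} (hp : p ∈ Sq) : rhoP p = 1 ↔ p.2 = 1 ∨ p.2 = -1 := by
  obtain ⟨⟨h1, h2⟩, h3, h4⟩ := hp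
  have hx : |p.1 - 1/2| ≤ 1/2 := by rw [abs_le]; constructor <;> linarith
  unfold rhoP
  constructor
  · intro h
    rcases max_choice |p.1 - 1/2| |p.2| with e | e
    · rw [e] at h; linarith
    · rw [e] at h; exact sign_cases h
  · intro h
    have : |p.2| = 1 := by rcases h with h | h <;> rw [h] <;> simp
    rw [this, max_eq_right (by linarith)]

lemma mem_C1 (x : X) : x ∈ C1 ↔ rho x.1 = 1 := by
  constructor
  · rintro ⟨p, hp, h⟩
    rw [← hp, ← sig_qm, rho_sig p.2]; exact (rhoP_eq_one p.2).2 h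
  · intro h
    refine ⟨⟨rep x.1, rep_mem _⟩, ?_, ?_⟩
    · rw [← sig_qm]; exact sig_rep _
    · exact (rhoP_eq_one (rep_mem _)).1 h

lemma X_closed : IsClosed Xset := by
  have : Xset = {m | 1/4 ≤ rho m} := by ext m; exact mem_X m
  rw [this]
  exact isClosed_le continuous_const rho_cont

lemma mem_Bd (x : X) : x ∈ Bd ↔ rho x.1 = 1 ∨ rho x.1 = 1/4 := by
  rw [← mem_C1, ← mem_C2]; rfl

end

section

open Set Topology

/-- admissible radial reparametrisations -/
def Good (r b : ℝ) : Prop := 1/4 ≤ b ∧ (1/2 ≤ r → b = r) ∧ (r ≤ 1/2 → b ≤ 1/2)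

/-- scaling about the centre of the hole, in coordinates -/
noncomputable def scP (p : ℝ × ℝ) (c : ℝ) : ℝ × ℝ := (1/2 + (p.1 - 1/2) * c, p.2 * c)

lemma scP_one (p : ℝ × ℝ) : scP p 1 = p := by
  ext <;> simp [scP]

/-- moving a point radially to height `b` -/
noncomputable def rad (m : M) (b : ℝ) : M := sig (scP (rep m) (b / rho m))

lemma rhoP_half {p : ℝ × ℝ} (h : rhoP p < 1/2) : p.1 ≠ 0 ∧ p.1 ≠ 1 := by
  have : |p.1 - 1/2| < 1/2 := lt_of_le_of_lt (le_max_left _ _) h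
  rw [abs_lt] at this
  constructor <;> intro h <;> rw [h] at this <;> norm_num at this

lemma rad_sig {p : ℝ × ℝ} (hp : p ∈ Sq) (h0 : 0 < rhoP p) {b : ℝ} (hg : Good (rhoP p) b) :
    rad (sig p) b = sig (scP p (b / rhoP p)) := by
  unfold rad
  rw [rho_sig hp]
  rcases le_or_gt (1/2) (rhoP p) with h | h
  · rw [hg.2.1 h, div_self h0.ne', scP_one, scP_one, sig_rep]
  · obtain ⟨h1, h2⟩ := rhoP_half h
    rcases sig_eq (rep_mem _) hp (sig_rep (sig p)) with h | ⟨_, h3, _⟩ | ⟨_, h3, _⟩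
    · rw [h]
    · exact absurd h3 h2
    · exact absurd h3 h1

lemma rhoP_scP (p : ℝ × ℝ) {c : ℝ} (hc : 0 ≤ c) : rhoP (scP p c) = rhoP p * c := by
  unfold rhoP scP
  simp only
  rw [max_mul_of_nonneg _ _ hc, add_sub_cancel_left, abs_mul, abs_mul, abs_of_nonneg hc]

lemma Sq_of_rhoP {p : ℝ × ℝ} (h : rhoP p ≤ 1/2) : p ∈ Sq := by
  have h1 := (le_max_left _ _).trans h
  have h2 := (le_max_right _ _).trans h
  rw [abs_le] at h1 h2
  refine ⟨⟨?_, ?_⟩, ?_, ?_⟩ <;> linarith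

lemma rho_rad {m : M} (h0 : 0 < rho m) {b : ℝ} (hg : Good (rho m) b) : rho (rad m b) = b := by
  obtain ⟨p, hp, rfl⟩ := sig_surj m
  rw [rho_sig hp] at h0 hg
  rw [rad_sig hp h0 hg]
  rcases le_or_gt (1/2) (rhoP p) with h | h
  · rw [hg.2.1 h, div_self h0.ne', scP_one, rho_sig hp]
  · have hb : 0 ≤ b / rhoP p := div_nonneg (by linarith [hg.1]) h0.le
    have e : rhoP (scP p (b / rhoP p)) = b := by
      rw [rhoP_scP _ hb]; field_simp
    rw [rho_sig (Sq_of_rhoP (by rw [e]; exact hg.2.2 h.le)), e]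

lemma rad_self {m : M} (h0 : 0 < rho m) : rad m (rho m) = m := by
  unfold rad
  rw [div_self h0.ne', scP_one, sig_rep]

lemma X_pos (x : X) : 0 < rho x.1 := by
  have := (mem_X x.1).1 x.2
  linarith

lemma rad_cont {K : Type*} [TopologicalSpace K] (b : K × ℝ → ℝ) (hb : Continuous b)
    (hg : ∀ k r, 1/4 ≤ r → Good r (b (k, r))) :
    Continuous (fun z : K × X => rad z.2.1 (b (z.1, rho z.2.1))) := by
  refine quot_M Xset X_closed _ (fun z => sig (scP z.2 (b (z.1, rhoP z.2) / rhoP z.2))) ?_ ?_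
  · refine sig_cont.comp_continuousOn ?_
    have hd : ContinuousOn (fun z : K × (ℝ × ℝ) => b (z.1, rhoP z.2) / rhoP z.2)
        {z | z.2 ∈ Sq ∧ sig z.2 ∈ Xset} := by
      refine ContinuousOn.div ?_ ?_ ?_
      · exact (hb.comp (continuous_fst.prodMk (rhoP_cont.comp continuous_snd))).continuousOn
      · exact (rhoP_cont.comp continuous_snd).continuousOn
      · rintro z ⟨h1, h2⟩
        rw [mem_X, rho_sig h1] at h2
        linarith
    unfold scP
    refine ContinuousOn.prodMk ?_ ?_
    · exact continuousOn_const.add (ContinuousOn.mul (by fun_prop) hd)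
    · exact ContinuousOn.mul (by fun_prop) hd
  · intro k x p hp h
    have hx := (mem_X x.1).1 x.2
    simp only [← h, rho_sig hp] at hx ⊢
    exact rad_sig hp (by linarith) (hg k _ hx)

/-- radial maps of the punctured Möbius band -/
noncomputable def radX (m : X) (b : ℝ) (h : Good (rho m.1) b) : X :=
  ⟨rad m.1 b, (mem_X _).2 (by rw [rho_rad (X_pos m) h]; exact h.1)⟩

/-- the inward push reparametrisation -/
noncomputable def bst (z : unitInterval × ℝ) : ℝ :=
  max (1/4) (z.2 - 3 * (z.1 : ℝ) * max 0 (1/2 - z.2))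

lemma bst_cont : Continuous bst := by unfold bst; fun_prop

lemma bst_good (k : unitInterval) (r : ℝ) (hr : 1/4 ≤ r) : Good r (bst (k, r)) := by
  have h0 := k.2.1
  refine ⟨le_max_left _ _, fun h => ?_, fun h => ?_⟩
  · simp only [bst]
    rw [max_eq_left (b := 1/2 - r) (by linarith), max_eq_right (by linarith)]; ring
  · simp only [bst]
    have : 0 ≤ (k : ℝ) * max 0 (1/2 - r) := mul_nonneg h0 (le_max_left _ _)
    exact max_le (by norm_num) (by nlinarith)

/-- the collar push -/
noncomputable def stX (z : unitInterval × X) : X := radX z.2 _ (bst_good z.1 _ ((mem_X _).1 z.2.2))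

lemma stX_cont : Continuous stX := (rad_cont bst bst_cont bst_good).subtype_mk _

lemma rho_stX (z : unitInterval × X) : rho (stX z).1 = bst (z.1, rho z.2.1) :=
  rho_rad (X_pos _) (bst_good z.1 _ ((mem_X _).1 z.2.2))

lemma stX_eq {z : unitInterval × X} (h : bst (z.1, rho z.2.1) = rho z.2.1) : stX z = z.2 := by
  apply Subtype.ext
  change rad _ _ = _
  rw [h]; exact rad_self (X_pos _)

/-- the outward push reparametrisation -/
noncomputable def bph (z : unitInterval × ℝ) : ℝ := max z.2 (1/4 + (z.1 : ℝ) / 8)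

lemma bph_cont : Continuous bph := by unfold bph; fun_prop

lemma bph_good (k : unitInterval) (r : ℝ) (hr : 1/4 ≤ r) : Good r (bph (k, r)) := by
  have h0 := k.2.1
  have h1 := k.2.2
  refine ⟨le_max_of_le_left hr, fun h => ?_, fun h => ?_⟩
  · exact max_eq_left (by simp only; linarith)
  · exact max_le h (by simp only; linarith)

/-- the outward push -/
noncomputable def phX (z : unitInterval × X) : X := radX z.2 _ (bph_good z.1 _ ((mem_X _).1 z.2.2))

lemma phX_cont : Continuous phX := (rad_cont bph bph_cont bph_good).subtype_mk _

lemma rho_phX (z : unitInterval × X) : rho (phX z).1 = max (rho z.2.1) (1/4 + (z.1 : ℝ) / 8) :=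
  rho_rad (X_pos _) (bph_good z.1 _ ((mem_X _).1 z.2.2))

lemma phX_zero (x : X) : phX (0, x) = x := by
  apply Subtype.ext
  change rad _ _ = _
  have : bph (0, rho x.1) = rho x.1 := by
    have := (mem_X _).1 x.2
    simp only [bph]; rw [max_eq_left]; simpa using this
  rw [this]; exact rad_self (X_pos _)

end

section

open Set Topology

/-- excess of the first coordinate -/
noncomputable def dl (p : ℝ × ℝ) : ℝ := max (|4 * (p.1 - 1/2)| - 1) 0
/-- clamped first coordinate -/
noncomputable def aa (p : ℝ × ℝ) : ℝ := cl (4 * (p.1 - 1/2))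
/-- clamped second coordinate -/
noncomputable def bb (p : ℝ × ℝ) : ℝ := cl (4 * p.2)
/-- second coordinate of the deformation -/
noncomputable def b2 (p : ℝ × ℝ) : ℝ := bb p - max (-2 * dl p) (min (bb p) (2 * dl p))
/-- position on the seam arc -/
noncomputable def d2 (p : ℝ × ℝ) : ℝ := max 0 (min (2 * dl p - |bb p|) 1)
/-- the retraction onto the spine, in coordinates -/
noncomputable def rP (p : ℝ × ℝ) : ℝ × ℝ := (1/2 + aa p * (1 + d2 p) / 4, b2 p / 4)
/-- the map to the theta graph, in coordinates -/
noncomputable def jP (p : ℝ × ℝ) : ℝ × ℝ := (aa p * (1 - |b2 p| / 2) * (1 - d2 p), b2 p)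

lemma dl_cont : Continuous dl := by unfold dl; fun_prop
lemma aa_cont : Continuous aa := by have := cl_cont; unfold aa; fun_prop
lemma bb_cont : Continuous bb := by have := cl_cont; unfold bb; fun_prop
lemma b2_cont : Continuous b2 := by
  have := dl_cont; have := bb_cont; unfold b2; fun_prop
lemma d2_cont : Continuous d2 := by
  have := dl_cont; have := bb_cont; unfold d2; fun_prop
lemma rP_cont : Continuous rP := by
  have := aa_cont; have := b2_cont; have := d2_cont; unfold rP; fun_prop
lemma jP_cont : Continuous jP := by
  have := aa_cont; have := b2_cont; have := d2_cont; unfold jP; fun_prop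

lemma cl_abs_ge {y : ℝ} (h : 1 ≤ |y|) : |cl y| = 1 := by
  unfold cl
  rcases le_abs.1 h with h | h
  · rw [min_eq_right h]; norm_num
  · rw [min_eq_left (by linarith), max_eq_left (by linarith)]; norm_num

lemma cl_abs (y : ℝ) : |cl y| ≤ 1 := abs_le.2 (cl_mem y)

lemma cl_mul {e : ℝ} (he : |e| = 1) {c : ℝ} (hc : 1 ≤ c) : cl (e * c) = e := by
  rcases sign_cases he with rfl | rfl
  · unfold cl; rw [min_eq_right (by linarith)]; norm_num
  · unfold cl; rw [min_eq_left (by linarith), max_eq_left (by linarith)]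

lemma nf (p : ℝ × ℝ) (h : 1/4 ≤ rhoP p) : |aa p| ≤ 1 ∧ |b2 p| ≤ 1 ∧ 0 ≤ d2 p ∧ d2 p ≤ 1 ∧
    ((d2 p = 0 ∧ |b2 p| = 1) ∨ (d2 p = 0 ∧ |aa p| = 1) ∨ (|aa p| = 1 ∧ b2 p = 0)) := by
  have hb := cl_abs (4 * p.2)
  have hdl : 0 ≤ dl p := le_max_right _ _
  have hb2 : |b2 p| ≤ 1 := by
    unfold b2
    change |bb p| ≤ 1 at hb
    rw [abs_le] at hb ⊢
    rcases le_total (bb p) (2 * dl p) with h1 | h1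
    · rw [min_eq_left h1]
      rcases le_total (-2 * dl p) (bb p) with h2 | h2
      · rw [max_eq_right h2]; constructor <;> linarith
      · rw [max_eq_left h2]; constructor <;> linarith
    · rw [min_eq_right h1, max_eq_right (by linarith)]; constructor <;> linarith
  refine ⟨cl_abs _, hb2, le_max_left _ _, max_le zero_le_one (min_le_right _ _), ?_⟩
  rcases lt_or_ge |4 * (p.1 - 1/2)| 1 with ha | ha
  · left
    have h0 : dl p = 0 := max_eq_right (by linarith)
    have hbb : |bb p| = 1 := by
      apply cl_abs_ge
      rw [abs_mul] at ha ⊢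
      rw [abs_of_pos (by norm_num : (0:ℝ) < 4)] at ha ⊢
      rcases le_max_iff.1 h with h | h <;> linarith
    constructor
    · unfold d2; rw [h0, hbb]; norm_num
    · unfold b2; rw [h0]
      have : max (-2 * (0:ℝ)) (min (bb p) (2 * 0)) = 0 := by simp
      rw [this, sub_zero, hbb]
  · right
    have h1 : |aa p| = 1 := cl_abs_ge ha
    rcases le_total (2 * dl p) |bb p| with h2 | h2
    · left
      exact ⟨max_eq_left (min_le_of_left_le (by linarith)), h1⟩
    · right
      refine ⟨h1, ?_⟩
      unfold b2
      rw [abs_le] at h2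
      rw [min_eq_left h2.2, max_eq_right (by linarith [h2.1]), sub_self]

lemma bet_of {e y : ℝ} (he : |e| = 1) (hy : |y| ≤ 1) : bet (e * (1 - |y| / 2)) = |y| := by
  rw [bet_mul he]
  unfold bet
  have := abs_nonneg y
  rw [abs_of_nonneg (by linarith), min_eq_right (by linarith)]; ring

lemma bet_small {x : ℝ} (h : |x| ≤ 1/2) : bet x = 1 := by
  unfold bet; exact min_eq_left (by linarith)

lemma jP_circ (p : ℝ × ℝ) (h : 1/4 ≤ rhoP p) (h0 : d2 p = 0) : jP p ∈ Circ := by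
  obtain ⟨h1, h2, h3, h4, h5⟩ := nf p h
  have hn := abs_nonneg (b2 p)
  have hle : |aa p * (1 - |b2 p| / 2)| ≤ 1 := by
    rw [abs_mul, abs_of_nonneg (a := 1 - |b2 p| / 2) (by linarith)]
    have := abs_nonneg (aa p)
    nlinarith
  refine ⟨?_, ?_⟩
  · simpa [jP, h0] using hle
  · simp only [jP, h0, sub_zero, mul_one]
    have hc : ∀ h6 : |aa p| = 1, |b2 p| = bet (aa p * (1 - |b2 p| / 2)) := fun h6 =>
      (bet_of h6 h2).symm
    rcases h5 with ⟨_, h6⟩ | ⟨_, h6⟩ | ⟨h6, _⟩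
    · rw [bet_small, h6]
      rw [h6, abs_mul]; norm_num; linarith
    · exact hc h6
    · exact hc h6

lemma jP_theta (p : ℝ × ℝ) (h : 1/4 ≤ rhoP p) : jP p ∈ Theta := by
  obtain ⟨h1, h2, h3, h4, h5⟩ := nf p h
  have h6 : d2 p = 0 ∨ (|aa p| = 1 ∧ b2 p = 0) := by tauto
  rcases h6 with h6 | ⟨h6, h7⟩
  · exact Circ_sub (jP_circ p h h6)
  · refine ⟨?_, Or.inl h7⟩
    simp only [jP, h7, abs_mul, h6, abs_zero]
    norm_num
    rw [abs_le]; constructor <;> linarith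

lemma C2_coords (p : ℝ × ℝ) (h : rhoP p = 1/4) : rP p = p ∧ d2 p = 0 := by
  have h1 : |p.1 - 1/2| ≤ 1/4 := h ▸ le_max_left _ _
  have h2 : |p.2| ≤ 1/4 := h ▸ le_max_right _ _
  have h4 : |(4:ℝ)| = 4 := by norm_num
  have ha : |4 * (p.1 - 1/2)| ≤ 1 := by rw [abs_mul, h4]; linarith
  have hb : |4 * p.2| ≤ 1 := by rw [abs_mul, h4]; linarith
  have hdl : dl p = 0 := max_eq_right (by linarith)
  have haa : aa p = 4 * (p.1 - 1/2) := cl_self ha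
  have hbb : bb p = 4 * p.2 := cl_self hb
  have hd : d2 p = 0 := by
    unfold d2; rw [hdl]
    exact max_eq_left (min_le_of_left_le (by simp))
  have hb2 : b2 p = 4 * p.2 := by
    unfold b2; rw [hdl, hbb]; simp
  refine ⟨?_, hd⟩
  unfold rP
  rw [haa, hd, hb2]
  ext <;> simp only <;> ring

lemma seam_coords (p : ℝ × ℝ) (h : p.1 = 0 ∨ p.1 = 1) :
    b2 p = 0 ∧ d2 p = 1 ∧ aa p = 2 * p.1 - 1 := by
  have hdl : dl p = 1 := by
    unfold dl
    rcases h with h | h <;> rw [h] <;> norm_num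
  have hb : |bb p| ≤ 1 := cl_abs _
  refine ⟨?_, ?_, ?_⟩
  · unfold b2; rw [hdl]
    rw [abs_le] at hb
    rw [min_eq_left (by linarith), max_eq_right (by linarith), sub_self]
  · unfold d2; rw [hdl, min_eq_right (by linarith)]; norm_num
  · unfold aa cl
    rcases h with h | h <;> rw [h] <;> norm_num

lemma seam_rP (p : ℝ × ℝ) (h : p.1 = 0 ∨ p.1 = 1) : rP p = (p.1, 0) := by
  obtain ⟨h1, h2, h3⟩ := seam_coords p h
  unfold rP
  rw [h1, h2, h3]
  ext <;> simp only <;> ring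

lemma seam_jP (p : ℝ × ℝ) (h : p.1 = 0 ∨ p.1 = 1) : jP p = (0, 0) := by
  obtain ⟨h1, h2, h3⟩ := seam_coords p h
  unfold jP
  rw [h1, h2]; simp

lemma quot_X {Y : Type*} [TopologicalSpace Y] (Φ : X → Y) (φ : ℝ × ℝ → Y)
    (hφ : ContinuousOn φ {p | p ∈ Sq ∧ sig p ∈ Xset})
    (h : ∀ (x : X) p, p ∈ Sq → sig p = x.1 → Φ x = φ p) : Continuous Φ := by
  have h' := quot_M (K := Unit) Xset X_closed (fun z => Φ z.2) (fun z => φ z.2)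
    (hφ.comp continuousOn_snd (fun z hz => hz)) (fun _ x p hp hpx => h x p hp hpx)
  exact h'.comp (f := fun x : X => ((), x)) (by fun_prop)

lemma rep_X (x : X) : 1/4 ≤ rhoP (rep x.1) := (mem_X x.1).1 x.2

/-- the map to the theta graph -/
noncomputable def jX (x : X) : Theta := ⟨jP (rep x.1), jP_theta _ (rep_X x)⟩

lemma jX_sig (x : X) {p : ℝ × ℝ} (hp : p ∈ Sq) (h : sig p = x.1) : (jX x).1 = jP p := by
  have h' : sig (rep x.1) = sig p := (sig_rep _).trans h.symm
  change jP (rep x.1) = _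
  rcases sig_eq (rep_mem _) hp h' with h | ⟨h1, h2, h3⟩ | ⟨h1, h2, h3⟩
  · rw [h]
  · rw [seam_jP _ (Or.inl h1), seam_jP _ (Or.inr h2)]
  · rw [seam_jP _ (Or.inr h1), seam_jP _ (Or.inl h2)]

lemma jX_cont : Continuous jX := by
  refine Topology.IsInducing.subtypeVal.continuous_iff.2 ?_
  exact quot_X _ jP jP_cont.continuousOn fun x p hp h => jX_sig x hp h

lemma jX_circ {x : X} (h : x ∈ C2) : (jX x).1 ∈ Circ := by
  rw [mem_C2] at h
  exact jP_circ _ (rep_X x) (C2_coords _ h).2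

/-- straight line homotopy to the spine, in coordinates -/
noncomputable def RP (t : ℝ) (p : ℝ × ℝ) : ℝ × ℝ :=
  ((1 - t) * p.1 + t * (rP p).1, (1 - t) * p.2 + t * (rP p).2)

lemma rP_mem {p : ℝ × ℝ} (h : 1/4 ≤ rhoP p) : rP p ∈ Sq := by
  obtain ⟨h1, h2, h3, h4, h5⟩ := nf p h
  rw [abs_le] at h1 h2
  refine ⟨⟨?_, ?_⟩, ?_, ?_⟩ <;> simp only [rP] <;> nlinarith

lemma RP_mem {t : ℝ} (h0 : 0 ≤ t) (h1 : t ≤ 1) {p : ℝ × ℝ} (hp : p ∈ Sq) (h : 1/4 ≤ rhoP p) :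
    RP t p ∈ Sq := by
  obtain ⟨⟨a1, a2⟩, a3, a4⟩ := hp
  obtain ⟨⟨c1, c2⟩, c3, c4⟩ := rP_mem h
  refine ⟨⟨?_, ?_⟩, ?_, ?_⟩ <;> simp only [RP] <;> nlinarith

lemma RP_rho {t : ℝ} (h0 : 0 ≤ t) (h1 : t ≤ 1) {p : ℝ × ℝ} (h : 1/4 ≤ rhoP p) :
    1/4 ≤ rhoP (RP t p) := by
  rcases lt_or_ge |4 * (p.1 - 1/2)| 1 with ha | ha
  · have h0' : dl p = 0 := max_eq_right (by linarith)
    have e : b2 p = bb p := by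
      unfold b2; rw [h0']
      have : max (-2 * (0:ℝ)) (min (bb p) (2 * 0)) = 0 := by simp
      rw [this, sub_zero]
    have hb : 1 ≤ |4 * p.2| := by
      rw [abs_mul] at ha ⊢
      rw [abs_of_pos (by norm_num : (0:ℝ) < 4)] at ha ⊢
      rcases le_max_iff.1 h with h | h <;> linarith
    refine le_max_of_le_right ?_
    simp only [RP, rP, e, bb, cl]
    rcases le_abs.1 hb with h | h
    · rw [min_eq_right h]
      refine le_abs.2 (Or.inl ?_); norm_num; nlinarith
    · rw [min_eq_left (by linarith), max_eq_left (by linarith)]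
      refine le_abs.2 (Or.inr ?_); norm_num; nlinarith
  · refine le_max_of_le_left ?_
    obtain ⟨_, _, h3, h4, _⟩ := nf p h
    simp only [RP, rP, aa, cl]
    rcases le_abs.1 ha with h | h
    · rw [min_eq_right h]
      refine le_abs.2 (Or.inl ?_); norm_num; nlinarith [mul_nonneg h0 h3]
    · rw [min_eq_left (by linarith), max_eq_left (by linarith)]
      refine le_abs.2 (Or.inr ?_); norm_num; nlinarith [mul_nonneg h0 h3]

/-- the homotopy to the spine -/
noncomputable def RX (z : unitInterval × X) : X :=
  ⟨sig (RP z.1 (rep z.2.1)), by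
    rw [mem_X, rho_sig (RP_mem z.1.2.1 z.1.2.2 (rep_mem _) (rep_X _))]
    exact RP_rho z.1.2.1 z.1.2.2 (rep_X _)⟩

lemma RX_sig (t : unitInterval) (x : X) {p : ℝ × ℝ} (hp : p ∈ Sq) (h : sig p = x.1) :
    (RX (t, x)).1 = sig (RP t p) := by
  have h' : sig (rep x.1) = sig p := (sig_rep _).trans h.symm
  change sig (RP t (rep x.1)) = _
  rcases sig_eq (rep_mem _) hp h' with h | ⟨h1, h2, h3⟩ | ⟨h1, h2, h3⟩
  · rw [h]
  · unfold RP
    rw [seam_rP _ (Or.inl h1), seam_rP _ (Or.inr h2), h1, h2, h3, ← sig_T]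
    congr 2
    · ring
    · simp
  · unfold RP
    rw [seam_rP _ (Or.inr h1), seam_rP _ (Or.inl h2), h1, h2, h3, ← sig_T ((1 - (t:ℝ)) * 0 + t * 0)]
    congr 2
    · ring
    · simp

lemma RX_cont : Continuous RX := by
  refine Topology.IsInducing.subtypeVal.continuous_iff.2 ?_
  refine quot_M Xset X_closed _ (fun z => sig (RP z.1 z.2)) ?_ fun t x p hp h => RX_sig t x hp h
  refine (sig_cont.comp ?_).continuousOn
  have h1 : Continuous (fun z : unitInterval × (ℝ × ℝ) => rP z.2) := rP_cont.comp continuous_snd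
  have ht : Continuous (fun z : unitInterval × (ℝ × ℝ) => (z.1 : ℝ)) := by fun_prop
  exact (((continuous_const.sub ht).mul continuous_snd.fst).add (ht.mul h1.fst)).prodMk
    (((continuous_const.sub ht).mul continuous_snd.snd).add (ht.mul h1.snd))

lemma RX_zero (x : X) : RX (0, x) = x := by
  apply Subtype.ext
  change sig (RP _ _) = _
  rw [← sig_rep x.1]
  congr 1
  rw [sig_rep]
  ext <;> simp [RP]

lemma RX_C2 (t : unitInterval) {x : X} (h : x ∈ C2) : RX (t, x) = x := by
  rw [mem_C2] at h
  apply Subtype.ext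
  change sig (RP _ _) = _
  conv_rhs => rw [← sig_rep x.1]
  congr 1
  unfold RP
  rw [(C2_coords (rep x.1) h).1]
  ext <;> simp only <;> ring

/-- the map from the theta graph back -/
noncomputable def kP (θ : ℝ × ℝ) : M :=
  if bet θ.1 ≤ 2 * |θ.2| then sig (1/2 + cl (2 * θ.1) / 4, θ.2 / 4)
  else sig (1/2 + (2 - θ.1) / 4, 0)

lemma sig_shift (x : ℝ) : sig (x + 1, 0) = sig (x, 0) := by
  have := sig_T x 0; rwa [neg_zero] at this

lemma kP_vert {x : ℝ} (h : |x| = 1) :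
    sig (1/2 + cl (2 * x) / 4, 0) = sig (1/2 + (2 - x) / 4, 0) := by
  rcases sign_cases h with rfl | rfl
  · congr 2; norm_num [cl]
  · rw [← sig_shift]; congr 2; norm_num [cl]

lemma kP_cont : Continuous (fun θ : Theta => kP θ.1) := by
  unfold kP
  have h1 := sig_cont
  have h2 := cl_cont
  have h3 := bet_cont
  refine continuous_if_le (by fun_prop) (by fun_prop) (by fun_prop) (by fun_prop) ?_
  rintro ⟨⟨x, y⟩, a1, a2⟩ h
  simp only at h a1 a2 ⊢
  have hy : y = 0 := by
    rcases a2 with a2 | a2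
    · exact a2
    · rw [← a2] at h; have : |y| = 0 := by linarith
      exact abs_eq_zero.1 this
  subst hy
  simp only [abs_zero, mul_zero] at h
  rw [zero_div]
  exact kP_vert (bet_eq_zero h)

lemma kP_circ {θ : ℝ × ℝ} (h : θ ∈ Circ) : rho (kP θ) = 1/4 := by
  obtain ⟨h1, h2⟩ := h
  have hb := bet_nonneg h1
  unfold kP
  rw [if_pos (by rw [h2]; linarith)]
  have key : rhoP (1/2 + cl (2 * θ.1) / 4, θ.2 / 4) = 1/4 := by
    simp only [rhoP, add_sub_cancel_left, abs_div]
    have h4 : |(4:ℝ)| = 4 := by norm_num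
    rw [h4, h2]
    rcases le_total |θ.1| (1/2) with h | h
    · rw [bet_small h]
      have := cl_abs (2 * θ.1)
      exact max_eq_right (by linarith)
    · rw [cl_abs_ge (by rw [abs_mul]; norm_num; linarith)]
      have : bet θ.1 ≤ 1 := min_le_left _ _
      exact max_eq_left (by linarith)
  rw [rho_sig (Sq_of_rhoP (by rw [key]; norm_num)), key]

lemma kP_mem {θ : ℝ × ℝ} (h : θ ∈ Theta) : kP θ ∈ Xset := by
  rw [mem_X]
  by_cases hb : bet θ.1 ≤ 2 * |θ.2|
  · have : θ ∈ Circ := by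
      refine ⟨h.1, ?_⟩
      rcases h.2 with h2 | h2
      · have := bet_nonneg h.1
        rw [h2] at hb ⊢; simp at hb ⊢; linarith
      · exact h2
    exact (kP_circ this).ge
  · have h1 := abs_le.1 h.1
    unfold kP
    rw [if_neg hb]
    rcases le_total 0 θ.1 with h0 | h0
    · rw [rho_sig]
      · refine le_max_of_le_left (le_abs.2 (Or.inl ?_)); simp only; linarith
      · refine ⟨⟨?_, ?_⟩, ?_, ?_⟩ <;> simp only <;> linarith
    · have : (1/2 + (2 - θ.1) / 4 : ℝ) = ((-θ.1) / 4) + 1 := by ring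
      rw [this, sig_shift, rho_sig]
      · refine le_max_of_le_left (le_abs.2 (Or.inr ?_)); simp only; linarith
      · refine ⟨⟨?_, ?_⟩, ?_, ?_⟩ <;> simp only <;> linarith

/-- the map from the theta graph to the punctured Möbius band -/
noncomputable def kX (θ : Theta) : X := ⟨kP θ.1, kP_mem θ.2⟩

lemma kX_cont : Continuous kX := kP_cont.subtype_mk _

lemma kX_circ {θ : Theta} (h : θ.1 ∈ Circ) : kX θ ∈ C2 := (mem_C2 _).2 (kP_circ h)

lemma kP_jP {p : ℝ × ℝ} (h : 1/4 ≤ rhoP p) : kP (jP p) = sig (rP p) := by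
  obtain ⟨h1, h2, h3, h4, h5⟩ := nf p h
  have hn := abs_nonneg (b2 p)
  have hcl : |aa p| = 1 → cl (2 * (aa p * (1 - |b2 p| / 2))) = aa p := by
    intro h6
    have : 2 * (aa p * (1 - |b2 p| / 2)) = aa p * (2 - |b2 p|) := by ring
    rw [this, cl_mul h6 (by linarith)]
  have hcl1 : |b2 p| = 1 → cl (2 * (aa p * (1 - |b2 p| / 2))) = aa p := by
    intro h6
    have : 2 * (aa p * (1 - |b2 p| / 2)) = aa p := by rw [h6]; ring
    rw [this, cl_self h1]
  by_cases h0 : d2 p = 0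
  · have hc := jP_circ p h h0
    have hb := bet_nonneg hc.1
    unfold kP
    rw [if_pos (by rw [hc.2]; linarith)]
    simp only [jP, rP, h0, sub_zero, mul_one, add_zero]
    rcases h5 with ⟨_, h6⟩ | ⟨_, h6⟩ | ⟨h6, _⟩
    · rw [hcl1 h6]
    · rw [hcl h6]
    · rw [hcl h6]
  · have h6 : |aa p| = 1 ∧ b2 p = 0 := by tauto
    obtain ⟨h6, h7⟩ := h6
    have hd : 0 < d2 p := lt_of_le_of_ne h3 (Ne.symm h0)
    have e : jP p = (aa p * (1 - d2 p), 0) := by simp [jP, h7]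
    unfold kP
    rw [e, if_neg]
    · simp only [rP, h7, zero_div]
      rcases sign_cases h6 with h8 | h8 <;> rw [h8]
      · congr 2; ring
      · rw [← sig_shift (1/2 + -1 * (1 + d2 p) / 4)]; congr 2; ring
    · simp only [bet_mul h6]
      unfold bet
      rw [abs_of_nonneg (by linarith)]
      simp only [abs_zero, mul_zero, not_le]
      exact lt_min one_pos (by linarith)

lemma RX_one (x : X) : RX (1, x) = kX (jX x) := by
  apply Subtype.ext
  change sig (RP _ _) = kP (jP _)
  rw [kP_jP (rep_X x)]
  congr 1
  ext <;> simp [RP]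

end

section

open Set Topology

lemma rho_edge {p : ℝ × ℝ} (h : |p.2| = 1) : rho (sig p) = 1 := by
  have hr : sig (rep (sig p)) = sig p := sig_rep _
  have hm := rep_mem (sig p)
  have h1 := congrArg mE hr
  rw [mE_sig, mE_sig] at h1
  have h2 := congrArg (fun z : ℂ × ℂ => ‖z.2‖) h1
  have hn : ∀ x y : ℝ, ‖(mP (x, y)).2‖ = |y| := by
    intro x y
    simp [mP, Complex.norm_exp]
  simp only [hn] at h2
  have h3 : |(rep (sig p)).2| ≤ 1 := abs_le.2 hm.2
  rw [cl_self h3, cl_self h.le, h] at h2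
  rw [← hr, rho_sig hm, rhoP_eq_one hm]
  exact sign_cases h2

/-- root point over a point of the circle -/
def rootE (θ : Theta) (h : θ.1 ∈ Circ) : Ehat := ⟨(θ.1, 0), Or.inl ⟨h, rfl⟩⟩

lemma prj_rootE (θ : Theta) (h : θ.1 ∈ Circ) : prj (rootE θ h) = θ :=
  Subtype.ext (prj_root _ rfl)

lemma root_ext {a b : Ehat} (ha : a.1.2 = 0) (hb : b.1.2 = 0) (h : prj a = prj b) : a = b := by
  apply Subtype.ext
  refine Prod.ext ?_ (ha.trans hb.symm)
  rw [← prj_root a ha, ← prj_root b hb, h]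

lemma lift_inv {φ ψ : ℝ × ℝ → Ehat} (h1 : Continuous φ) (h2 : Continuous ψ)
    (h : ∀ p, prj (φ p) = prj (ψ p)) (a : ℝ × ℝ) (ha : φ a = ψ a) (p : ℝ × ℝ) : φ p = ψ p :=
  congrFun (prj_covering.eq_of_comp_eq h1 h2 (funext h) a ha) p

lemma lift_lemma (Fb : M → X) (hF : Continuous Fb) (hb : ∀ m, rho m = 1 → Fb m ∈ C2)
    (hess : ∀ φ : C(C1, C2), (∀ x, (φ x).1 = Fb x.1.1) → ¬ Inessential φ) :
    ∃ G : M → Ehat, Continuous G ∧ (∀ m, prj (G m) = jX (Fb m)) ∧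
      ∀ m, rho m = 1 → (G m).1.2 = 0 := by
  have hcirc : ∀ p : ℝ × ℝ, |p.2| = 1 → (jX (Fb (sig p))).1 ∈ Circ := fun p hp =>
    jX_circ (hb _ (rho_edge hp))
  let u : C(ℝ × ℝ, Theta) := ⟨fun p => jX (Fb (sig p)), jX_cont.comp (hF.comp sig_cont)⟩
  have h01 : |((0, 1) : ℝ × ℝ).2| = 1 := by simp
  obtain ⟨F, ⟨hF0, hFp⟩, -⟩ := prj_covering.existsUnique_continuousMap_lifts u (0, 1)
    (rootE _ (hcirc (0, 1) h01)) (prj_rootE _ _)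
  have hFp : ∀ p, prj (F p) = jX (Fb (sig p)) := fun p => congrFun hFp p
  have hroot : ∀ x : ℝ, F (x, 1) = rootE _ (hcirc (x, 1) (by simp)) := by
    have hc1 : Continuous fun x : ℝ => F (x, 1) := F.continuous.comp (by fun_prop)
    have hc2 : Continuous fun x : ℝ => rootE _ (hcirc (x, 1) (by simp)) := by
      refine Continuous.subtype_mk (Continuous.prodMk ?_ continuous_const) _
      exact continuous_subtype_val.comp
        (jX_cont.comp (hF.comp (sig_cont.comp (by fun_prop))))
    intro x
    refine congrFun (prj_covering.eq_of_comp_eq hc1 hc2 ?_ 0 hF0) x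
    funext x
    simp only [Function.comp, prj_rootE, hFp]
  have hroot0 : ∀ x : ℝ, (F (x, 1)).1.2 = 0 := fun x => by rw [hroot]; rfl
  have sig2 : ∀ p : ℝ × ℝ, sig (p.1 + 2, p.2) = sig p := by
    intro p
    rw [← sig_T p.1 p.2, ← sig_T (p.1 + 1), neg_neg]; congr 2; ring
  have hper : ∀ p : ℝ × ℝ, F (p.1 + 2, p.2) = F p := by
    refine lift_inv (F.continuous.comp (by fun_prop)) F.continuous ?_ (0, 1) ?_
    · intro p; rw [hFp, hFp, sig2]
    · apply root_ext (hroot0 _) (hroot0 _)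
      rw [hFp, hFp, sig2]
  by_cases hex : ∃ x : ℝ, (F (x, -1)).1.2 = 0
  · obtain ⟨x₁, hx₁⟩ := hex
    have hT : ∀ p : ℝ × ℝ, F (p.1 + 1, -p.2) = F p := by
      refine lift_inv (F.continuous.comp (by fun_prop)) F.continuous ?_ (x₁ - 1, 1) ?_
      · intro p; rw [hFp, hFp, sig_T]
      · apply root_ext _ (hroot0 _)
        · rw [hFp, hFp, sig_T]
        · simpa using hx₁
    refine ⟨fun m => F (rep m), ?_, fun m => by rw [hFp, sig_rep], ?_⟩
    · have := quot_M (K := Unit) (univ : Set M) isClosed_univ (fun z => F (rep z.2.1))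
        (fun z => F z.2) (F.continuous.comp continuous_snd).continuousOn ?_
      · exact this.comp (g := fun z : Unit × (univ : Set M) => F (rep z.2.1))
          (f := fun m : M => ((), ⟨m, mem_univ m⟩)) (by fun_prop)
      · intro k x p hp hpx
        rcases sig_eq (rep_mem x.1) hp (by rw [sig_rep, hpx]) with h | ⟨h1, h2, h3⟩ | ⟨h1, h2, h3⟩
        · simp only [h]
        · simp only
          rw [← hT (rep x.1)]
          congr 1; ext
          · simp [h1, h2]
          · simp [h3]
        · simp only
          rw [← hT p]
          congr 1; ext
          · simp [h1, h2]
          · simp [h3]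
    · intro m hm
      rw [← sig_rep m, rho_sig (rep_mem m), rhoP_eq_one (rep_mem m)] at hm
      rcases hm with h | h
      · have := hroot0 (rep m).1
        rwa [← h] at this
      · have := hroot0 ((rep m).1 + 1)
        change (F (rep m)).1.2 = 0
        rw [← hT (rep m), h, neg_neg]; exact this
  · exfalso
    push Not at hex
    obtain ⟨v, hv⟩ : ∃ v : ℝ, ∀ x : ℝ, (F (x, -1)).1.1 = (v, 0) := by
      have hc1 : Continuous fun x : ℝ => (F (x, -1)).1.1 :=
        (continuous_fst.comp continuous_subtype_val).comp (F.continuous.comp (by fun_prop))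
      have hd : ∀ x : ℝ, (F (x, -1)).1.1.1 ∈ ({1, -1} : Set ℝ) := fun x =>
        sign_cases (E_nonroot (hex x)).1
      have hs : IsPreconnected (range fun x : ℝ => (F (x, -1)).1.1.1) :=
        isPreconnected_range (continuous_fst.comp hc1)
      have hsub : (range fun x : ℝ => (F (x, -1)).1.1.1).Subsingleton := by
        have key : ∀ x y : ℝ, (F (x, -1)).1.1.1 = 1 → (F (y, -1)).1.1.1 = -1 → False := by
          intro x y hx hy
          obtain ⟨z, hz⟩ := hs.ordConnected.out (mem_range_self y) (mem_range_self x)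
            (show (0:ℝ) ∈ _ from ⟨by simp only [hy]; norm_num, by simp only [hx]; norm_num⟩)
          have hz' : (F (z, -1)).1.1.1 = 0 := hz
          rcases hd z with h | h
          · rw [hz'] at h; norm_num at h
          · have h' : (F (z, -1)).1.1.1 = -1 := h
            rw [hz'] at h'; norm_num at h'
        rintro _ ⟨x, rfl⟩ _ ⟨y, rfl⟩
        rcases hd x with h | h <;> rcases hd y with h' | h'
        · exact h.trans h'.symm
        · exact (key x y h h').elim
        · exact (key y x h' h).elim
        · exact h.trans h'.symm
      refine ⟨(F (0, -1)).1.1.1, fun x => Prod.ext ?_ (E_nonroot (hex x)).2⟩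
      exact hsub (mem_range_self x) (mem_range_self 0)
    have hA : IsClosed {m : M | rho m = 1} := isClosed_eq rho_cont continuous_const
    let Ψ : Unit × {m : M | rho m = 1} → Ehat :=
      fun z => F ((rep z.2.1).1 + (1 + (rep z.2.1).2) / 2, -1)
    have hcases : ∀ m, rho m = 1 → (rep m).2 = 1 ∨ (rep m).2 = -1 := by
      intro m hm
      rwa [← rhoP_eq_one (rep_mem m), ← rho_sig (rep_mem m), sig_rep]
    have hΨc : Continuous Ψ := by
      refine quot_M _ hA Ψ (fun z => F (z.2.1 + (1 + z.2.2) / 2, -1))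
        (F.continuous.comp (by fun_prop)).continuousOn ?_
      intro k x p hp hpx
      have hy := hcases x.1 x.2
      rcases sig_eq (rep_mem x.1) hp (by rw [sig_rep, hpx]) with h | ⟨h1, h2, h3⟩ | ⟨h1, h2, h3⟩
      · simp only [Ψ, h]
      · simp only [Ψ, h1, h2]
        rcases hy with hy | hy
        · have e : p.2 = -1 := by linarith
          rw [hy, e]; congr 1; ext <;> norm_num
        · have e : p.2 = 1 := by linarith
          rw [hy, e, ← hper]; congr 1; ext <;> norm_num
      · simp only [Ψ, h1, h2]
        rcases hy with hy | hy
        · have e : p.2 = -1 := by linarith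
          rw [hy, e, ← hper (0 + _, _)]; congr 1; ext <;> norm_num
        · have e : p.2 = 1 := by linarith
          rw [hy, e]; congr 1; ext <;> norm_num
    have hΨp : ∀ z, prj (Ψ z) = jX (Fb z.2.1) := by
      intro z
      simp only [Ψ, hFp]
      congr 2
      rcases hcases z.2.1 z.2.2 with h | h
      · conv_rhs => rw [← sig_rep z.2.1]
        have : rep z.2.1 = ((rep z.2.1).1, 1) := Prod.ext rfl h
        rw [h, this, ← sig_T _ 1]; congr 2; norm_num
      · conv_rhs => rw [← sig_rep z.2.1]
        have : rep z.2.1 = ((rep z.2.1).1, -1) := Prod.ext rfl h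
        rw [h, this]; congr 2; norm_num
    let ι : C1 → Unit × {m : M | rho m = 1} := fun c => ((), ⟨c.1.1, (mem_C1 _).1 c.2⟩)
    have hι : Continuous ι := by
      refine continuous_const.prodMk (Continuous.subtype_mk ?_ _)
      exact continuous_subtype_val.comp continuous_subtype_val
    let θf : ℝ × C1 → Theta := fun z => prj (rhoD (z.1, Ψ (ι z.2)))
    have hθ : Continuous θf :=
      prj_cont.comp (rhoD_cont.comp (continuous_fst.prodMk (hΨc.comp (hι.comp continuous_snd))))
    let Hm : ℝ × C1 → C2 := fun z => ⟨kX ⟨rTh (θf z).1, Circ_sub (rTh_mem (θf z).2)⟩,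
      kX_circ (rTh_mem (θf z).2)⟩
    have hHm : Continuous Hm :=
      (kX_cont.comp ((rTh_cont.comp (continuous_subtype_val.comp hθ)).subtype_mk _)).subtype_mk _
    let φ : C(C1, C2) := ⟨fun x => ⟨Fb x.1.1, hb _ ((mem_C1 _).1 x.2)⟩,
      (hF.comp (continuous_subtype_val.comp continuous_subtype_val)).subtype_mk _⟩
    have hvC : (v, (0:ℝ)) ∈ Circ := by
      have := E_nonroot (hex 0)
      rw [hv] at this
      exact vert_mem this.1 this.2
    refine hess φ (fun x => rfl) ⟨⟨kX ⟨(v, 0), Circ_sub hvC⟩, kX_circ hvC⟩, ⟨⟨⟨fun z => Hm (z.1, z.2), ?_⟩, ?_, ?_⟩⟩⟩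
    · exact hHm.comp (by fun_prop)
    · intro x
      apply Subtype.ext
      have e0 : θf (0, x) = jX (Fb x.1.1) := by
        simp only [θf, rhoD_zero, hΨp, ι]
      have hm2 : Fb x.1.1 ∈ C2 := hb _ ((mem_C1 _).1 x.2)
      have e1 : (⟨rTh (θf (0, x)).1, Circ_sub (rTh_mem (θf (0, x)).2)⟩ : Theta) = jX (Fb x.1.1) := by
        apply Subtype.ext
        simp only [e0]
        exact rTh_self (jX_circ hm2)
      change kX ⟨rTh (θf ((0:unitInterval), x)).1, _⟩ = Fb x.1.1
      refine (congrArg kX e1).trans ?_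
      rw [ ← RX_one, RX_C2 _ hm2]
    · intro x
      apply Subtype.ext
      change kX ⟨rTh (θf ((1:unitInterval), x)).1, _⟩ = kX ⟨(v, 0), _⟩
      congr 1
      apply Subtype.ext
      have e0 : (θf (1, x)).1 = (v, 0) := by
        simp only [θf]
        rw [prj_root _ (rhoD_one _), rhoD_fst]
        exact hv _
      exact (congrArg rTh e0).trans (rTh_self hvC)

end

section

open Set Topology

lemma kX_jX {x : X} (h : x ∈ C2) : kX (jX x) = x := by rw [← RX_one, RX_C2 _ h]

/-- retraction of the punctured band onto the inner circle -/
noncomputable def rC (x : X) : C2 :=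
  ⟨kX ⟨rTh (jX x).1, Circ_sub (rTh_mem (jX x).2)⟩, kX_circ (rTh_mem (jX x).2)⟩

lemma rC_cont : Continuous rC :=
  (kX_cont.comp ((rTh_cont.comp (continuous_subtype_val.comp jX_cont)).subtype_mk _)).subtype_mk _

lemma rC_self {x : X} (h : x ∈ C2) : rC x = ⟨x, h⟩ := by
  apply Subtype.ext
  have e : (⟨rTh (jX x).1, Circ_sub (rTh_mem (jX x).2)⟩ : Theta) = jX x :=
    Subtype.ext (rTh_self (jX_circ h))
  exact (congrArg kX e).trans (kX_jX h)

lemma bh_trans {f g h : C(X, X)} (h1 : BoundaryHomotopic f g) (h2 : BoundaryHomotopic g h) :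
    BoundaryHomotopic f h := by
  obtain ⟨H, hH⟩ := h1
  obtain ⟨K, hK⟩ := h2
  refine ⟨H.trans K, fun x hx t => ?_⟩
  rw [ContinuousMap.Homotopy.trans_apply]
  split_ifs
  · exact hH x hx _
  · exact hK x hx _

/-- the parameter of the first deformation -/
noncomputable def aP (z : unitInterval × ℝ) : ℝ := z.2 - 3 * z.1 * max 0 (1/2 - z.2)

lemma aP_cont : Continuous aP := by unfold aP; fun_prop

lemma bst_aP (z : unitInterval × ℝ) : bst z = max (1/4) (aP z) := rfl

lemma rhoX_cont : Continuous fun x : X => rho x.1 := rho_cont.comp continuous_subtype_val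

lemma rhoX_ge (x : X) : 1/4 ≤ rho x.1 := (mem_X _).1 x.2

lemma first_def (f : C(X, X)) (hmaps : MapsTo f Bd C2)
    (h2 : Inessential (restrictMap f (hmaps.mono_left subset_union_right : MapsTo f C2 C2))) :
    ∃ (f1 : C(X, X)) (p0 : X), p0 ∈ C2 ∧ BoundaryHomotopic f f1 ∧
      (∀ x : X, rho x.1 ≤ 3/8 → f1 x = p0) ∧ (∀ x ∈ C1, f1 x = f x) := by
  obtain ⟨b, ⟨H⟩⟩ := h2
  let m : unitInterval × X → unitInterval := fun z => projIcc 0 1 zero_le_one (1 - 4 * aP (z.1, rho z.2.1))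
  have ha : Continuous fun z : unitInterval × X => aP (z.1, rho z.2.1) :=
    aP_cont.comp (continuous_fst.prodMk (rhoX_cont.comp continuous_snd))
  have hm : Continuous m := continuous_projIcc.comp (continuous_const.sub (continuous_const.mul ha))
  let n : unitInterval × X → X := fun z => (H (m z, rC (stX z))).1
  have hn : Continuous n := continuous_subtype_val.comp
    (H.continuous.comp (hm.prodMk (rC_cont.comp stX_cont)))
  let D : unitInterval × X → X := fun z => if aP (z.1, rho z.2.1) ≤ 1/4 then n z else f (stX z)
  have hst : ∀ z : unitInterval × X, aP (z.1, rho z.2.1) ≤ 1/4 → stX z ∈ C2 := by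
    intro z hz
    rw [mem_C2, rho_stX, bst_aP, max_eq_left hz]
  have hm0 : ∀ z : unitInterval × X, aP (z.1, rho z.2.1) = 1/4 → n z = f (stX z) := by
    intro z hz
    have : m z = 0 := by
      simp only [m, hz]
      exact projIcc_of_le_left _ (by norm_num)
    simp only [n, this, H.apply_zero, rC_self (hst z hz.le)]
    rfl
  have hD : Continuous D := continuous_if_le ha continuous_const hn.continuousOn
    (f.continuous.comp stX_cont).continuousOn hm0
  have hstid : ∀ z : unitInterval × X, 1/2 ≤ rho z.2.1 → D z = f z.2 := by
    intro z hz
    have e : aP (z.1, rho z.2.1) = rho z.2.1 := by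
      simp only [aP]; rw [max_eq_left (by linarith)]; ring
    simp only [D]
    rw [if_neg (by rw [e]; linarith), stX_eq]
    rw [bst_aP, e, max_eq_right (rhoX_ge _)]
  let f1 : C(X, X) := ⟨fun x => D (1, x), hD.comp (by fun_prop)⟩
  refine ⟨f1, b.1, b.2, ⟨⟨⟨D, hD⟩, ?_, fun x => rfl⟩, ?_⟩, ?_, ?_⟩
  · intro x
    have e : aP (0, rho x.1) = rho x.1 := by simp [aP]
    have e2 : stX (0, x) = x := stX_eq (by rw [bst_aP]; simp only [e]; exact max_eq_right (rhoX_ge _))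
    change D (0, x) = f x
    by_cases h : rho x.1 = 1/4
    · simp only [D]
      rw [if_pos (by rw [e, h]), hm0 _ (e.trans h), e2]
    · have := lt_of_le_of_ne (rhoX_ge x) (Ne.symm h)
      simp only [D]
      rw [if_neg (by rw [e]; linarith), e2]
  · intro x hx t
    change D (t, x) ∈ Bd
    by_cases h : 1/2 ≤ rho x.1
    · rw [hstid _ h]; exact Or.inr (hmaps hx)
    · by_cases h' : aP (t, rho x.1) ≤ 1/4
      · simp only [D]; rw [if_pos h']
        exact Or.inr (H _).2
      · exfalso
        rcases (mem_Bd x).1 hx with hh | hh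
        · rw [hh] at h; norm_num at h
        · apply h'; rw [hh]; simp only [aP]
          have : 0 ≤ (t:ℝ) * max 0 (1/2 - 1/4) := mul_nonneg t.2.1 (le_max_left _ _)
          linarith
  · intro x hx
    have e : aP (1, rho x.1) = 4 * rho x.1 - 3/2 := by
      simp only [aP]; rw [max_eq_right (by linarith)]; simp; ring
    change D (1, x) = b.1
    simp only [D]
    rw [if_pos (by rw [e]; linarith)]
    have : m (1, x) = 1 := by
      simp only [m, e]
      exact projIcc_of_right_le _ (by linarith)
    simp only [n, this, H.apply_one]
    rfl
  · intro x hx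
    refine hstid (1, x) ?_
    rw [mem_C1] at hx
    simp only [hx]; norm_num

lemma extend_M (f1 : C(X, X)) (p0 : X) (h : ∀ x : X, rho x.1 ≤ 3/8 → f1 x = p0) :
    ∃ Fb : M → X, Continuous Fb ∧ (∀ x : X, Fb x.1 = f1 x) ∧ ∀ m, rho m ≤ 3/8 → Fb m = p0 := by
  classical
  let Fb : M → X := fun m => if hm : m ∈ Xset then f1 ⟨m, hm⟩ else p0
  have h1 : ∀ x : X, Fb x.1 = f1 x := fun x => by simp only [Fb]; rw [dif_pos x.2]
  have h2 : ∀ m, rho m ≤ 3/8 → Fb m = p0 := by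
    intro m hm
    by_cases hx : m ∈ Xset
    · rw [h1 ⟨m, hx⟩, h ⟨m, hx⟩ hm]
    · simp only [Fb]; rw [dif_neg hx]
  refine ⟨Fb, ?_, h1, h2⟩
  have hA : IsClosed {m : M | rho m ≤ 3/8} := isClosed_le rho_cont continuous_const
  have hB : IsClosed {m : M | 3/8 ≤ rho m} := isClosed_le continuous_const rho_cont
  have cA : ContinuousOn Fb {m : M | rho m ≤ 3/8} :=
    continuousOn_const.congr (f := fun _ => p0) h2
  have cB : ContinuousOn Fb {m : M | 3/8 ≤ rho m} := by
    rw [continuousOn_iff_continuous_domRestrict]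
    have : ∀ z : {m : M | 3/8 ≤ rho m}, z.1 ∈ Xset := fun z => (mem_X _).2 (by
      have : 3/8 ≤ rho z.1 := z.2
      linarith)
    have e : domRestrict {m : M | 3/8 ≤ rho m} Fb = fun z => f1 ⟨z.1, this z⟩ :=
      funext fun z => h1 ⟨z.1, this z⟩
    rw [e]
    exact f1.continuous.comp (continuous_subtype_val.subtype_mk _)
  have := cA.union_of_isClosed cB hA hB
  rw [← continuousOn_univ]
  refine this.mono fun m _ => ?_
  exact le_total (rho m) (3/8)

end

section

open Set Topology

lemma disc_conn : IsPreconnected {m : M | rho m ≤ 3/8} := by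
  have e : {m : M | rho m ≤ 3/8} = sig '' (Icc (1/8:ℝ) (7/8) ×ˢ Icc (-3/8:ℝ) (3/8)) := by
    ext m
    constructor
    · intro h
      have h : rho m ≤ 3/8 := h
      refine ⟨rep m, ?_, sig_rep m⟩
      rw [← sig_rep m, rho_sig (rep_mem m)] at h
      have h1 := abs_le.1 ((le_max_left _ _).trans h)
      have h2 := abs_le.1 ((le_max_right _ _).trans h)
      refine ⟨⟨?_, ?_⟩, ?_, ?_⟩ <;> linarith [h1.1, h1.2, h2.1, h2.2]
    · rintro ⟨p, ⟨⟨h1, h2⟩, h3, h4⟩, rfl⟩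
      have hr : rhoP p ≤ 3/8 :=
        max_le (abs_le.2 ⟨by linarith, by linarith⟩) (abs_le.2 ⟨by linarith, by linarith⟩)
      change rho (sig p) ≤ 3/8
      rwa [rho_sig (Sq_of_rhoP (by linarith))]
  rw [e]
  exact (isPreconnected_Icc.prod isPreconnected_Icc).image _ sig_cont.continuousOn

/-- clamped radial coordinate -/
noncomputable def sU (x : X) : ℝ := max 0 (min 1 (8 * (rho x.1 - 1/4)))

lemma sU_cont : Continuous sU :=
  continuous_const.max (continuous_const.min (continuous_const.mul (rhoX_cont.sub continuous_const)))

lemma sU_mem (x : X) : sU x ∈ Icc (0:ℝ) 1 :=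
  ⟨le_max_left _ _, max_le zero_le_one (min_le_left _ _)⟩

lemma sU_big {x : X} (h : 3/8 ≤ rho x.1) : sU x = 1 := by
  unfold sU; rw [min_eq_left (by linarith), max_eq_right zero_le_one]

lemma sU_small {x : X} (h : rho x.1 ≤ 3/8) : sU x = 8 * (rho x.1 - 1/4) := by
  have := rhoX_ge x
  unfold sU; rw [min_eq_right (by linarith), max_eq_right (by linarith)]

/-- pushing height -/
noncomputable def hU (x : X) : unitInterval :=
  ⟨min (2 * sU x) (2 - 2 * sU x), by
    have h := sU_mem x
    refine ⟨le_min (by linarith [h.1]) (by linarith [h.2]), ?_⟩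
    by_contra hc
    push Not at hc
    have h1 := lt_min_iff.1 hc
    linarith [h1.1, h1.2]⟩

lemma hU_cont : Continuous hU :=
  ((continuous_const.mul sU_cont).min (continuous_const.sub (continuous_const.mul sU_cont))).subtype_mk _

lemma main_aux (f1 : C(X, X)) (p0 : X) (hp0 : p0 ∈ C2)
    (hc : ∀ x : X, rho x.1 ≤ 3/8 → f1 x = p0) (h1 : ∀ x ∈ C1, f1 x ∈ C2)
    (hess : ∀ φ : C(C1, C2), (∀ x, (φ x).1 = f1 x.1) → ¬ Inessential φ) :
    ∃ g : C(X, X), BoundaryHomotopic f1 g ∧ (∃ a b : X, {x | g x = x} ⊆ {a, b}) ∧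
      ∃ x₀ : X, {x | g x = x ∧ x ∉ Bd} = {x₀} := by
  obtain ⟨Fb, hFb, hFx, hFd⟩ := extend_M f1 p0 hc
  have hbX : ∀ m, rho m = 1 → ∃ hm : m ∈ Xset, (⟨m, hm⟩ : X) ∈ C1 := fun m hm =>
    ⟨(mem_X _).2 (by rw [hm]; norm_num), (mem_C1 _).2 hm⟩
  obtain ⟨G, hG, hGp, hGr⟩ := lift_lemma Fb hFb
    (fun m hm => by
      obtain ⟨hx, hx1⟩ := hbX m hm
      rw [hFx ⟨m, hx⟩]; exact h1 _ hx1)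
    (fun φ hφ => hess φ fun x => by rw [hφ, hFx])
  obtain ⟨w, hw⟩ : ∃ w : Ehat, ∀ m, rho m ≤ 3/8 → G m = w := by
    have hm0 : rho (sig (1/2, 0)) ≤ 3/8 := by
      have : rhoP (1/2, 0) = 0 := by simp [rhoP]
      rw [rho_sig (Sq_of_rhoP (by rw [this]; norm_num)), this]; norm_num
    refine ⟨G (sig (1/2, 0)), fun m hm => ?_⟩
    refine prj_covering.constOn_of_comp disc_conn hG.continuousOn ?_ hm hm0
    intro a ha b hb
    have ha : rho a ≤ 3/8 := ha
    have hb : rho b ≤ 3/8 := hb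
    simp only [Function.comp, hGp, hFd a ha, hFd b hb]
  let F : ℝ × X → X := fun z => kX (prj (rhoD (z.1, G z.2.1)))
  have hF : Continuous F := kX_cont.comp (prj_cont.comp (rhoD_cont.comp
    (continuous_fst.prodMk (hG.comp (continuous_subtype_val.comp continuous_snd)))))
  let κ : X → ℝ := fun x => min (2 * sU x) 1
  have hκ : Continuous κ := (continuous_const.mul sU_cont).min continuous_const
  let D : unitInterval × X → X := fun z => phX (z.1 * hU z.2, F ((z.1:ℝ) * κ z.2, z.2))
  have hD : Continuous D := phX_cont.comp
    ((continuous_fst.mul (hU_cont.comp continuous_snd)).prodMk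
      (hF.comp (((continuous_subtype_val.comp continuous_fst).mul
        (hκ.comp continuous_snd)).prodMk continuous_snd)))
  let k1 : C(X, X) := ⟨fun x => kX (jX (f1 x)), kX_cont.comp (jX_cont.comp f1.continuous)⟩
  let g : C(X, X) := ⟨fun x => D (1, x), hD.comp (by fun_prop)⟩
  have hbd : ∀ x ∈ Bd, f1 x ∈ C2 := by
    rintro x (hx | hx)
    · exact h1 x hx
    · rw [hc x (by rw [(mem_C2 x).1 hx]; norm_num)]; exact hp0
  have hF0 : ∀ x, F (0, x) = kX (jX (f1 x)) := by
    intro x; simp only [F, rhoD_zero, hGp, hFx]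
  have hF1 : ∀ x, F (1, x) ∈ C2 := fun x => kX_circ (prj_root_mem (rhoD_one _))
  have hs2 : ∀ x ∈ C2, sU x = 0 := by
    intro x hx
    have := (mem_C2 x).1 hx
    rw [sU_small (by rw [this]; norm_num), this]; norm_num
  have hh0 : ∀ x, sU x = 0 → hU x = 0 := by
    intro x hx; apply Subtype.ext; simp [hU, hx]
  have hh1 : ∀ x, sU x = 1 → hU x = 0 := by
    intro x hx; apply Subtype.ext; simp [hU, hx]
  have bh1 : BoundaryHomotopic f1 k1 := by
    refine ⟨⟨⟨fun z => RX (z.1, f1 z.2), RX_cont.comp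
      (continuous_fst.prodMk (f1.continuous.comp continuous_snd))⟩, ?_, ?_⟩, ?_⟩
    · intro x; exact RX_zero _
    · intro x; exact RX_one _
    · intro x hx t
      change RX (t, f1 x) ∈ Bd
      rw [RX_C2 _ (hbd x hx)]
      exact Or.inr (hbd x hx)
  have bh2 : BoundaryHomotopic k1 g := by
    refine ⟨⟨⟨D, hD⟩, ?_, fun x => rfl⟩, ?_⟩
    · intro x
      change phX (0 * hU x, F (((0:unitInterval):ℝ) * κ x, x)) = kX (jX (f1 x))
      rw [zero_mul, phX_zero, ← hF0]
      congr 2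
      simp
    · intro x hx t
      change phX (t * hU x, F ((t:ℝ) * κ x, x)) ∈ Bd
      right
      rcases hx with hx | hx
      · have hr := (mem_C1 x).1 hx
        rw [hh1 x (sU_big (by rw [hr]; norm_num)), mul_zero, phX_zero]
        refine kX_circ (prj_root_mem ?_)
        rw [rhoD_root (hGr _ hr)]; exact hGr _ hr
      · have e : κ x = 0 := by simp [κ, hs2 x hx]
        rw [hh0 x (hs2 x hx), mul_zero, phX_zero, e, mul_zero, hF0, kX_jX (hbd x (Or.inr hx))]
        exact hbd x (Or.inr hx)
  have hgx : ∀ x, g x = phX (hU x, F (κ x, x)) := by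
    intro x
    change phX (1 * hU x, F (((1:unitInterval):ℝ) * κ x, x)) = _
    rw [one_mul]; congr 3; simp
  have hrg : ∀ x, rho (g x).1 = max (rho (F (κ x, x)).1) (1/4 + ((hU x : unitInterval) : ℝ) / 8) := by
    intro x; rw [hgx, rho_phX]
  let c : X := kX (prj (rhoD (1, w)))
  have hcC : c ∈ C2 := kX_circ (prj_root_mem (rhoD_one _))
  have hcr : rho c.1 = 1/4 := (mem_C2 _).1 hcC
  let u : unitInterval := ⟨2/3, by norm_num, by norm_num⟩
  let x₀ : X := phX (u, c)
  have hx0r : rho x₀.1 = 1/3 := by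
    simp only [x₀, rho_phX, hcr, u]; norm_num
  have hs0 : ∀ x, rho x.1 = 1/3 → g x = x₀ := by
    intro x hx
    have hs : sU x = 2/3 := by rw [sU_small (by rw [hx]; norm_num), hx]; norm_num
    have hu : hU x = u := by
      apply Subtype.ext
      simp only [hU, hs, u]; norm_num
    have hk : κ x = 1 := by simp only [κ, hs]; norm_num
    rw [hgx, hu, hk]
    simp only [F, hw x.1 (by rw [hx]; norm_num), x₀, c]
  have hfix : ∀ x, g x = x → x = x₀ ∨ x = p0 := by
    intro x hx
    have hr : rho (g x).1 = rho x.1 := by rw [hx]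
    rw [hrg] at hr
    rcases le_or_gt (3/8) (rho x.1) with hb | hb
    · exfalso
      have hs := sU_big hb
      have hk : κ x = 1 := by simp only [κ, hs]; norm_num
      rw [hk, hh1 x hs, (mem_C2 _).1 (hF1 x)] at hr
      simp at hr
      linarith
    · have hs := sU_small hb.le
      have hge := rhoX_ge x
      rcases lt_or_ge (sU x) (1/2) with hl | hl
      · have hu : ((hU x : unitInterval) : ℝ) = 2 * sU x := by
          simp only [hU]; exact min_eq_left (by linarith)
        have := le_max_right (rho (F (κ x, x)).1) (1/4 + ((hU x : unitInterval) : ℝ) / 8)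
        rw [hr, hu] at this
        have h0 : sU x = 0 := by linarith [(sU_mem x).1]
        right
        have hk : κ x = 0 := by simp [κ, h0]
        rw [← hx, hgx, hh0 x h0, phX_zero, hk, hF0, hc x hb.le, kX_jX hp0]
      · left
        have hu : ((hU x : unitInterval) : ℝ) = 2 - 2 * sU x := by
          simp only [hU]; exact min_eq_right (by linarith)
        have hk : κ x = 1 := min_eq_right (by linarith)
        rw [hk, (mem_C2 _).1 (hF1 x), hu, max_eq_right (by linarith [(sU_mem x).2])] at hr
        rw [← hx]
        exact hs0 x (by linarith)
  have hx0B : x₀ ∉ Bd := by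
    rw [mem_Bd, hx0r]; norm_num
  refine ⟨g, bh_trans bh1 bh2, ⟨x₀, p0, fun x hx => hfix x hx⟩, x₀, ?_⟩
  ext x
  constructor
  · rintro ⟨hx, hxB⟩
    rcases hfix x hx with h | h
    · exact h
    · exact (hxB (h ▸ Or.inr hp0)).elim
  · rintro rfl
    exact ⟨hs0 _ hx0r, hx0B⟩

lemma stmt_aux (f : C(X, X)) (hmaps : MapsTo f Bd C2)
    (he1 : Essential (restrictMap f (hmaps.mono_left subset_union_left : MapsTo f C1 C2)))
    (h2 : Inessential (restrictMap f (hmaps.mono_left subset_union_right : MapsTo f C2 C2))) :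
    ∃ g : C(X, X), BoundaryHomotopic f g ∧ (∃ a b : X, {x | g x = x} ⊆ {a, b}) ∧
      ∃ x₀ : X, {x | g x = x ∧ x ∉ Bd} = {x₀} := by
  obtain ⟨f1, p0, hp0, hb, hc, h1⟩ := first_def f hmaps h2
  obtain ⟨g, hg, h3⟩ := main_aux f1 p0 hp0 hc
    (fun x hx => by rw [h1 x hx]; exact hmaps (Or.inl hx))
    (fun φ hφ hin => he1 (by
      convert hin using 1
      ext x
      exact congrArg Subtype.val ((h1 _ x.2).symm.trans (hφ x).symm)))
  exact ⟨g, bh_trans hb hg, h3⟩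

end

/-- A boundary semi-essential map of the punctured Möbius band with `f(∂X) ⊆ C₂`,
`f|C₁ : C₁ → C₂` essential and `f|C₂ : C₂ → C₂` inessential, is boundary-homotopic to
a map with at most two fixed points, exactly one of which lies in the interior. -/
theorem stmt_14 (f : C(X, X)) (hf : BoundaryPreserving f)
    (hmaps : MapsTo f Bd C2)
    (he1 : Essential (restrictMap f (hmaps.mono_left Set.subset_union_left : MapsTo f C1 C2)))
    (h2 : Inessential (restrictMap f (hmaps.mono_left Set.subset_union_right : MapsTo f C2 C2))) :
    ∃ g : C(X, X), BoundaryHomotopic f g ∧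
      (∃ a b : X, {x : X | g x = x} ⊆ {a, b}) ∧
      ∃ x₀ : X, {x : X | g x = x ∧ x ∉ Bd} = {x₀} := by
  exact stmt_aux f hmaps he1 h2

end PMB
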